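/- arXiv:1310.5428 — 3 statements merged into one kernel-verified Lean document; each statement's English description precedes it below -/
import Mathlib

section
/- The Stieltjes transform of the Marčenko–Pastur law with ratio parameter y ∈ (0,∞) and scale σ² satisfies m_g(z) = (σ²(1-y) - z + √((z - σ² - yσ²)² - 4yσ⁴)) / (2yzσ²) for all z in the upper half plane, where the square root branch is chosen so that m_g(z) has positive imaginary part. -/
open MeasureTheory Complex

/-- Density of the Marčenko–Pastur law with ratio `y` and scale `σ2`. -/
noncomputable def mpDensity (y σ2 : ℝ) (x : ℝ) : ℝ :=
  if σ2 * (1 - Real.sqrt y)^2 ≤ x ∧ x ≤ σ2 * (1 + Real.sqrt y)^2 then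
    (1 / (2 * Real.pi * x * y * σ2)) *
      Real.sqrt ((σ2 * (1 + Real.sqrt y)^2 - x) * (x - σ2 * (1 - Real.sqrt y)^2))
  else 0

/-- The Marčenko–Pastur law with ratio `y` and scale `σ2`: absolutely continuous
part with density `mpDensity`, plus a point mass `1 - 1/y` at the origin when `y > 1`. -/
noncomputable def mpLaw (y σ2 : ℝ) : Measure ℝ :=
  (volume.withDensity fun x => ENNReal.ofReal (mpDensity y σ2 x)) +
    (if 1 < y then (ENNReal.ofReal (1 - 1 / y)) • (Measure.dirac (0 : ℝ)) else 0)

/-!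
Write the support as `[c - R, c + R]` and substitute `x = c + R cos θ`. With `s² = (ζ - c)² - R²`
and `ζ - c - s = R w`, the transform of the semicircle weight `√(R² - (x - c)²)` at `ζ` becomes an
integral of `sin² θ / (1 - 2 w cos θ + w²)`; for `|w| < 1` this kernel is a sum of the values at
`e^{iθ}` and `e^{-iθ}` of a function holomorphic in the unit disc, so the mean value property gives
`π (s - (ζ - c))`.

The density carries an extra `1 / x`, and `1 / (x (x - z)) = z⁻¹ (1 / (x - z) - 1 / x)` leaves the
spectral parameters `z` and `0`. The latter contributes `√(c² - R²) = σ² |1 - y|`, which the atom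
`max (1 - 1/y) 0 = (|1 - y| - (1 - y)) / (2y)` turns into `σ² (1 - y)`. If `y = 1`, then `0` is an
endpoint of the support, where `|w| = 1` but the kernel degenerates to a trigonometric polynomial.

The candidate value has inverse `(σ² (1 - y) - z - s) / 2`, so it has positive imaginary part only
if `z + s` does; as `(z - c - s) (z - c + s) = R²`, this forces `‖z - c - s‖ < R`, i.e. `|w| < 1`.
-/

open scoped Real

section CircleIntegrals

variable {E : Type*} [NormedAddCommGroup E] [NormedSpace ℂ E] [CompleteSpace E]

lemma integral_exp_mul_I_of_diffContOnCl {f : ℂ → E} (hf : DiffContOnCl ℂ f (Metric.ball 0 1)) :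
    ∫ θ in 0..2 * π, f (exp (θ * I)) = (2 * π) • f 0 := by
  have havg : Real.circleAverage f 0 1 = f 0 := DiffContOnCl.circleAverage (by simpa using hf)
  rw [← havg, Real.circleAverage_def, smul_inv_smul₀ Real.two_pi_pos.ne']
  simp only [circleMap, ofReal_one, one_mul, zero_add]

lemma integral_exp_add_exp_neg_of_diffContOnCl {f : ℂ → E}
    (hf : DiffContOnCl ℂ f (Metric.ball 0 1)) :
    ∫ θ in 0..π, (f (exp (θ * I)) + f (exp (-θ * I))) = (2 * π) • f 0 := by
  set g : ℝ → E := fun θ ↦ f (exp (θ * I)) with hg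
  have hper : Function.Periodic g (2 * π) := fun θ ↦ by
    simp only [hg, ofReal_add, ofReal_mul, ofReal_ofNat, add_mul, exp_periodic _]
  have hcont : Continuous g := hf.continuousOn_ball.comp_continuous (by fun_prop) fun θ ↦ by
    simp [norm_exp_ofReal_mul_I]
  have hint (a b : ℝ) : IntervalIntegrable g volume a b := hcont.intervalIntegrable a b
  calc ∫ θ in 0..π, (f (exp (θ * I)) + f (exp (-θ * I)))
      = (∫ θ in 0..π, g θ) + ∫ θ in 0..π, g (-θ) := by
        rw [← intervalIntegral.integral_add (hint _ _)
          (Continuous.intervalIntegrable (by fun_prop) _ _)]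
        simp only [hg, ofReal_neg]
    _ = ∫ θ in (-π)..π, g θ := by
        rw [intervalIntegral.integral_comp_neg, neg_zero, add_comm,
          intervalIntegral.integral_add_adjacent_intervals (hint _ _) (hint _ _)]
    _ = ∫ θ in 0..2 * π, g θ := by
        simpa [two_mul] using hper.intervalIntegral_add_eq (-π) 0
    _ = (2 * π) • f 0 := integral_exp_mul_I_of_diffContOnCl hf

end CircleIntegrals

section SineKernel

variable {w : ℂ}

lemma one_sub_mul_ne_zero_of_norm_lt_one {u : ℂ} (hw : ‖w‖ < 1) (hu : ‖u‖ ≤ 1) : 1 - w * u ≠ 0 :=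
  sub_ne_zero.mpr fun h ↦ by
    have : ‖w‖ * ‖u‖ < 1 := mul_lt_one_of_nonneg_of_lt_one_left (norm_nonneg w) hw hu
    rw [← norm_mul, ← h, norm_one] at this
    exact this.false

lemma sin_sq_div_eq_add (hw : ‖w‖ < 1) (θ : ℝ) :
    (Real.sin θ : ℂ) ^ 2 / (1 - 2 * w * Real.cos θ + w ^ 2)
      = (1 - exp (θ * I) ^ 2) / (4 * (1 - w * exp (θ * I)))
        + (1 - exp (-θ * I) ^ 2) / (4 * (1 - w * exp (-θ * I))) := by
  have hu := one_sub_mul_ne_zero_of_norm_lt_one hw (norm_exp_ofReal_mul_I θ).le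
  have hv := one_sub_mul_ne_zero_of_norm_lt_one hw (norm_exp_ofReal_mul_I (-θ)).le
  have huv : exp (θ * I) * exp (-θ * I) = 1 := by rw [← Complex.exp_add]; simp
  rw [ofReal_sin, ofReal_cos, Complex.sin, Complex.cos]
  push_cast at hv
  generalize exp (θ * I) = u at *
  generalize exp (-θ * I) = v at *
  have hden : 1 - 2 * w * ((u + v) / 2) + w ^ 2 = (1 - w * u) * (1 - w * v) := by
    linear_combination (-w ^ 2) * huv
  have hnum : ((v - u) * I / 2) ^ 2
      = ((1 - u ^ 2) * (1 - w * v) + (1 - v ^ 2) * (1 - w * u)) / 4 := by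
    linear_combination ((v - u) ^ 2 / 4) * I_sq + ((2 - w * (u + v)) / 4) * huv
  rw [hden, hnum]
  generalize 1 - w * u = p at *
  generalize 1 - w * v = q at *
  field

lemma integral_sin_sq_div_of_norm_lt_one (hw : ‖w‖ < 1) :
    ∫ θ in 0..π, (Real.sin θ : ℂ) ^ 2 / (1 - 2 * w * Real.cos θ + w ^ 2) = (π : ℂ) / 2 := by
  have hf : DiffContOnCl ℂ (fun u : ℂ ↦ (1 - u ^ 2) / (4 * (1 - w * u))) (Metric.ball 0 1) :=
    DifferentiableOn.diffContOnCl_ball (U := Metric.closedBall 0 1)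
      (.div (by fun_prop) (by fun_prop) fun u hu ↦
        mul_ne_zero (by norm_num) (one_sub_mul_ne_zero_of_norm_lt_one hw (by simpa using hu)))
      subset_rfl
  simp only [sin_sq_div_eq_add hw, integral_exp_add_exp_neg_of_diffContOnCl hf, real_smul]
  push_cast
  ring

lemma integral_sin_sq_div_of_sq_eq_one (hw : w ^ 2 = 1) :
    ∫ θ in 0..π, (Real.sin θ : ℂ) ^ 2 / (1 - 2 * w * Real.cos θ + w ^ 2) = (π : ℂ) / 2 := by
  have hsimp : Set.EqOn (fun θ : ℝ ↦ (Real.sin θ : ℂ) ^ 2 / (1 - 2 * w * Real.cos θ + w ^ 2))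
      (fun θ ↦ 1 / 2 + w / 2 * Real.cos θ) (Set.uIoo 0 π) := by
    intro θ hθ
    rw [Set.uIoo_of_le Real.pi_pos.le] at hθ
    have hsin : (Real.sin θ : ℂ) ^ 2 ≠ 0 := by
      exact_mod_cast pow_ne_zero 2 (Real.sin_pos_of_mem_Ioo hθ).ne'
    have hfac : (Real.sin θ : ℂ) ^ 2 = (1 - w * Real.cos θ) * (1 + w * Real.cos θ) := by
      have : (Real.sin θ : ℂ) ^ 2 + (Real.cos θ : ℂ) ^ 2 = 1 := by
        exact_mod_cast Real.sin_sq_add_cos_sq θ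
      linear_combination this + (Real.cos θ : ℂ) ^ 2 * hw
    rw [hfac] at hsin
    have hne := left_ne_zero_of_mul hsin
    have hden : 1 - 2 * w * Real.cos θ + w ^ 2 = 2 * (1 - w * Real.cos θ) := by
      linear_combination hw
    simp only [hfac, hden]
    field
  rw [intervalIntegral.integral_congr_uIoo hsimp,
    intervalIntegral.integral_add (by simp) (Continuous.intervalIntegrable (by fun_prop) _ _),
    intervalIntegral.integral_const_mul, intervalIntegral.integral_ofReal]
  simp [div_eq_mul_inv]

end SineKernel

section Semicircle

lemma integral_sqrt_smul_eq_integral_sin_sq {E : Type*} [NormedAddCommGroup E] [NormedSpace ℝ E]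
    {R : ℝ} (hR : 0 ≤ R) (c : ℝ) (g : ℝ → E) :
    ∫ x in (c - R)..(c + R), √(R ^ 2 - (x - c) ^ 2) • g x
      = ∫ θ in 0..π, (R * Real.sin θ) ^ 2 • g (c + R * Real.cos θ) := by
  have hsub := intervalIntegral.integral_deriv_smul_comp_of_deriv_nonpos
    (a := 0) (b := π) (f := fun θ ↦ c + R * Real.cos θ) (f' := fun θ ↦ R * -Real.sin θ)
    (g := fun x ↦ √(R ^ 2 - (x - c) ^ 2) • g x) (by fun_prop)
    (fun θ _ ↦ ((Real.hasDerivAt_cos θ).const_mul R).const_add c)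
    (fun θ hθ ↦ by
      have hsin : 0 < Real.sin θ := Real.sin_pos_of_mem_Ioo (by simpa [Real.pi_pos.le] using hθ)
      nlinarith)
  simp only [Real.cos_zero, Real.cos_pi, mul_one, mul_neg, ← sub_eq_add_neg] at hsub
  rw [intervalIntegral.integral_symm, ← hsub, ← intervalIntegral.integral_neg]
  refine intervalIntegral.integral_congr fun θ hθ ↦ ?_
  have hsin : 0 ≤ R * Real.sin θ :=
    mul_nonneg hR (Real.sin_nonneg_of_mem_Icc (by rwa [Set.uIcc_of_le Real.pi_pos.le] at hθ))
  have hsqrt : √(R ^ 2 - (c + R * Real.cos θ - c) ^ 2) = R * Real.sin θ := by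
    rw [← Real.sqrt_sq hsin]
    congr 1
    linear_combination (-R ^ 2) * Real.sin_sq_add_cos_sq θ
  simp only [Function.comp_apply, hsqrt, smul_smul, neg_smul, neg_mul, neg_neg, sq (R * _)]

variable {c R : ℝ} {ζ s : ℂ}

theorem integral_sqrt_div_sub (hR : 0 < R) (hs : s ^ 2 = (ζ - c) ^ 2 - R ^ 2)
    (hbranch : ‖ζ - c - s‖ < R ∨ s = 0) :
    ∫ x in (c - R)..(c + R), (√(R ^ 2 - (x - c) ^ 2) : ℂ) / (x - ζ) = π * (s - (ζ - c)) := by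
  have hRC : (R : ℂ) ≠ 0 := by exact_mod_cast hR.ne'
  obtain ⟨w, hw⟩ : ∃ w : ℂ, ζ - c - s = R * w := ⟨(ζ - c - s) / R, by field⟩
  have hjoukowski : 2 * w * (ζ - c) = R * (w ^ 2 + 1) := by
    apply mul_left_cancel₀ hRC
    linear_combination -hs - (ζ - c + s - R * w) * hw
  have hw0 : w ≠ 0 := by rintro rfl; exact hRC (by simpa using hjoukowski.symm)
  have hkernel : ∫ θ in 0..π, (Real.sin θ : ℂ) ^ 2 / (1 - 2 * w * Real.cos θ + w ^ 2)
      = (π : ℂ) / 2 := by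
    rcases hbranch with hlt | hs0
    · rw [hw, norm_mul, norm_real, Real.norm_of_nonneg hR.le] at hlt
      exact integral_sin_sq_div_of_norm_lt_one (by nlinarith)
    · refine integral_sin_sq_div_of_sq_eq_one (mul_left_cancel₀ (pow_ne_zero 2 hRC) ?_)
      rw [hs0] at hs hw
      linear_combination -hs - (ζ - c + R * w) * hw
  have hpoint (θ : ℝ) : (R * Real.sin θ) ^ 2 • (((c + R * Real.cos θ : ℝ) : ℂ) - ζ)⁻¹
      = -(2 * R * w) * ((Real.sin θ : ℂ) ^ 2 / (1 - 2 * w * Real.cos θ + w ^ 2)) := by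
    have hden : ((c + R * Real.cos θ : ℝ) : ℂ) - ζ
        = -(R / (2 * w)) * (1 - 2 * w * Real.cos θ + w ^ 2) := by
      push_cast
      field_simp
      linear_combination -hjoukowski
    rw [hden, real_smul, mul_inv, div_eq_mul_inv]
    push_cast
    field
  simp only [div_eq_mul_inv, ← real_smul (z := (_ - ζ)⁻¹)]
  rw [integral_sqrt_smul_eq_integral_sin_sq hR.le c fun x ↦ ((x : ℂ) - ζ)⁻¹]
  simp only [hpoint]
  rw [intervalIntegral.integral_const_mul, hkernel]
  linear_combination (π : ℂ) * hw

lemma intervalIntegrable_sqrt_div_sub (hR : 0 < R) (hs : s ^ 2 = (ζ - c) ^ 2 - R ^ 2)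
    (hbranch : ‖ζ - c - s‖ < R ∨ s = 0) :
    IntervalIntegrable (fun x : ℝ ↦ (√(R ^ 2 - (x - c) ^ 2) : ℂ) / (x - ζ)) volume
      (c - R) (c + R) := by
  -- The integral of a non-integrable function is `0` by convention, so a nonzero value suffices.
  refine intervalIntegral.intervalIntegrable_of_integral_ne_zero ?_
  rw [integral_sqrt_div_sub hR hs hbranch]
  refine mul_ne_zero (by exact_mod_cast Real.pi_ne_zero) (sub_ne_zero.mpr ?_)
  rintro rfl
  have : (R : ℂ) ^ 2 = 0 := by linear_combination hs
  simp [hR.ne'] at this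

lemma abs_sqrt_sq_sub_sq_sub_lt (hR : 0 < R) (hRc : R < c) : |√(c ^ 2 - R ^ 2) - c| < R := by
  have hpos : 0 < √(c ^ 2 - R ^ 2) := Real.sqrt_pos.mpr (by nlinarith)
  have hsq : √(c ^ 2 - R ^ 2) ^ 2 = c ^ 2 - R ^ 2 := Real.sq_sqrt (by nlinarith)
  rw [abs_lt]
  constructor <;> nlinarith

theorem integral_sqrt_div_mul_inv_sub (hR : 0 < R) (hRc : R ≤ c) (hζ : ζ.im ≠ 0)
    (hs : s ^ 2 = (ζ - c) ^ 2 - R ^ 2) (hbranch : ‖ζ - c - s‖ < R) :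
    ∫ x in (c - R)..(c + R), (√(R ^ 2 - (x - c) ^ 2) / x : ℂ) * (x - ζ)⁻¹
      = π * (s - ζ + √(c ^ 2 - R ^ 2)) / ζ := by
  have hζ0 : ζ ≠ 0 := by rintro rfl; exact hζ zero_im
  have hs₀ : (-√(c ^ 2 - R ^ 2) : ℂ) ^ 2 = (0 - c) ^ 2 - R ^ 2 := by
    rw [neg_sq, zero_sub, neg_sq]
    exact_mod_cast Real.sq_sqrt (show 0 ≤ c ^ 2 - R ^ 2 by nlinarith)
  have hbranch₀ : ‖0 - (c : ℂ) - -√(c ^ 2 - R ^ 2)‖ < R ∨ (-√(c ^ 2 - R ^ 2) : ℂ) = 0 := by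
    rcases hRc.eq_or_lt with rfl | hlt
    · exact .inr (by simp)
    · refine .inl ?_
      rw [zero_sub, neg_sub_neg, ← ofReal_sub, norm_real, Real.norm_eq_abs]
      exact abs_sqrt_sq_sub_sq_sub_lt hR hlt
  have hpartial : Set.EqOn
      (fun x : ℝ ↦ (√(R ^ 2 - (x - c) ^ 2) / x : ℂ) * (x - ζ)⁻¹)
      (fun x : ℝ ↦ ζ⁻¹ * (√(R ^ 2 - (x - c) ^ 2) / (x - ζ) - √(R ^ 2 - (x - c) ^ 2) / (x - 0)))
      (Set.uIoo (c - R) (c + R)) := by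
    intro x hx
    rw [Set.uIoo_of_le (by linarith)] at hx
    have hx0 : (x : ℂ) ≠ 0 := by exact_mod_cast ((sub_nonneg.mpr hRc).trans_lt hx.1).ne'
    have hxζ : (x : ℂ) - ζ ≠ 0 := fun h ↦ hζ (by rw [← sub_eq_zero.mp h, ofReal_im])
    field
  rw [intervalIntegral.integral_congr_uIoo hpartial, intervalIntegral.integral_const_mul,
    intervalIntegral.integral_sub (intervalIntegrable_sqrt_div_sub hR hs (.inl hbranch))
      (intervalIntegrable_sqrt_div_sub hR hs₀ hbranch₀),
    integral_sqrt_div_sub hR hs (.inl hbranch), integral_sqrt_div_sub hR hs₀ hbranch₀]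
  ring

end Semicircle

lemma norm_lt_of_mul_eq_sq {u v : ℂ} {R : ℝ} (hR : 0 < R) (huv : u * v = (R : ℂ) ^ 2)
    (hv : 0 < v.im) (hadd : 0 < (u + v).im) : ‖u‖ < R := by
  have hnorm : ‖u‖ * ‖v‖ = R ^ 2 := by
    rw [← norm_mul, huv, norm_pow, norm_real, Real.norm_of_nonneg hR.le]
  have him : u.im * ‖v‖ ^ 2 = -R ^ 2 * v.im := by
    have hconj : u * ((‖v‖ ^ 2 : ℝ) : ℂ) = ((R ^ 2 : ℝ) : ℂ) * (starRingEnd ℂ) v := by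
      rw [ofReal_pow, ← mul_conj', ← mul_assoc, huv, ofReal_pow]
    simpa only [im_mul_ofReal, im_ofReal_mul, conj_im, mul_neg, neg_mul] using congrArg im hconj
  rw [add_im] at hadd
  have hlt : R < ‖v‖ := by
    have hvim : 0 < v.im * (‖v‖ ^ 2 - R ^ 2) := by
      have : 0 < ‖v‖ := norm_pos_iff.mpr fun h ↦ by simp [h] at hv
      nlinarith [mul_pos hadd (pow_pos this 2)]
    nlinarith [pos_of_mul_pos_right hvim hv.le, norm_nonneg v]
  nlinarith [norm_nonneg u]

section MarchenkoPastur

variable {y σ2 : ℝ}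

/-- The midpoint of the support interval of the absolutely continuous part of `mpLaw y σ2`. -/
def mpCenter (y σ2 : ℝ) : ℝ := σ2 * (1 + y)

/-- Half the length of the support interval of the absolutely continuous part of `mpLaw y σ2`. -/
noncomputable def mpRadius (y σ2 : ℝ) : ℝ := 2 * σ2 * √y

lemma mpRadius_pos (hy : 0 < y) (hσ : 0 < σ2) : 0 < mpRadius y σ2 := by
  have := Real.sqrt_pos.mpr hy
  unfold mpRadius
  positivity

lemma mpRadius_sq (hy : 0 ≤ y) (σ2 : ℝ) : mpRadius y σ2 ^ 2 = 4 * y * σ2 ^ 2 := by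
  unfold mpRadius
  linear_combination (4 * σ2 ^ 2) * Real.sq_sqrt hy

lemma mpCenter_sub_mpRadius (hy : 0 ≤ y) (σ2 : ℝ) :
    mpCenter y σ2 - mpRadius y σ2 = σ2 * (1 - √y) ^ 2 := by
  unfold mpCenter mpRadius
  linear_combination -σ2 * Real.sq_sqrt hy

lemma mpCenter_add_mpRadius (hy : 0 ≤ y) (σ2 : ℝ) :
    mpCenter y σ2 + mpRadius y σ2 = σ2 * (1 + √y) ^ 2 := by
  unfold mpCenter mpRadius
  linear_combination -σ2 * Real.sq_sqrt hy

lemma mpRadius_le_mpCenter (hy : 0 ≤ y) (hσ : 0 ≤ σ2) : mpRadius y σ2 ≤ mpCenter y σ2 := by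
  rw [← sub_nonneg, mpCenter_sub_mpRadius hy]
  positivity

lemma sqrt_mpCenter_sq_sub_mpRadius_sq (hy : 0 ≤ y) (hσ : 0 ≤ σ2) :
    √(mpCenter y σ2 ^ 2 - mpRadius y σ2 ^ 2) = σ2 * |1 - y| := by
  have hsq : mpCenter y σ2 ^ 2 - mpRadius y σ2 ^ 2 = (σ2 * (1 - y)) ^ 2 := by
    rw [mpRadius_sq hy, mpCenter]
    ring
  rw [hsq, Real.sqrt_sq_eq_abs, abs_mul, abs_of_nonneg hσ]

lemma mpDensity_eq_indicator (hy : 0 ≤ y) (σ2 : ℝ) :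
    mpDensity y σ2 =
      (Set.Icc (mpCenter y σ2 - mpRadius y σ2) (mpCenter y σ2 + mpRadius y σ2)).indicator fun x ↦
        (2 * π * y * σ2)⁻¹ * (√(mpRadius y σ2 ^ 2 - (x - mpCenter y σ2) ^ 2) / x) := by
  funext x
  simp only [mpDensity, ← mpCenter_sub_mpRadius hy, ← mpCenter_add_mpRadius hy, Set.indicator,
    Set.mem_Icc]
  congr 1
  ring_nf

lemma mpDensity_nonneg (hy : 0 ≤ y) (hσ : 0 ≤ σ2) (x : ℝ) : 0 ≤ mpDensity y σ2 x := by
  unfold mpDensity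
  split_ifs with h
  · have hx : 0 ≤ x := le_trans (by positivity) h.1
    positivity
  · exact le_rfl

lemma measurable_mpDensity (y σ2 : ℝ) : Measurable (mpDensity y σ2) := by
  unfold mpDensity
  exact Measurable.ite measurableSet_Icc (by fun_prop) measurable_const

lemma integral_mpDensity_smul {E : Type*} [NormedAddCommGroup E] [NormedSpace ℝ E]
    (hy : 0 ≤ y) (hσ : 0 ≤ σ2) (f : ℝ → E) :
    ∫ x, mpDensity y σ2 x • f x
      = (2 * π * y * σ2)⁻¹ •
          ∫ x in (mpCenter y σ2 - mpRadius y σ2)..(mpCenter y σ2 + mpRadius y σ2),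
            (√(mpRadius y σ2 ^ 2 - (x - mpCenter y σ2) ^ 2) / x) • f x := by
  have hle : mpCenter y σ2 - mpRadius y σ2 ≤ mpCenter y σ2 + mpRadius y σ2 := by
    have : 0 ≤ mpRadius y σ2 := by unfold mpRadius; positivity
    linarith
  simp only [mpDensity_eq_indicator hy, ← Set.indicator_smul_apply_left, mul_smul]
  rw [integral_indicator measurableSet_Icc, integral_Icc_eq_integral_Ioc,
    ← intervalIntegral.integral_of_le hle, intervalIntegral.integral_smul]

lemma mpLaw_eq (hy : 0 < y) (σ2 : ℝ) :
    mpLaw y σ2 = volume.withDensity (fun x ↦ ENNReal.ofReal (mpDensity y σ2 x))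
      + ENNReal.ofReal (1 - 1 / y) • Measure.dirac 0 := by
  rw [mpLaw]
  split_ifs with h
  · rfl
  · rw [ENNReal.ofReal_of_nonpos, zero_smul]
    rw [sub_nonpos, one_le_div hy]
    exact not_lt.mp h

lemma integral_mpLaw {E : Type*} [NormedAddCommGroup E] [NormedSpace ℝ E] [CompleteSpace E]
    (hy : 0 < y) (hσ : 0 ≤ σ2) {f : ℝ → E} (hf : Integrable fun x ↦ mpDensity y σ2 x • f x) :
    ∫ x, f x ∂(mpLaw y σ2) = (∫ x, mpDensity y σ2 x • f x) + max (1 - 1 / y) 0 • f 0 := by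
  have hm : Measurable fun x ↦ ENNReal.ofReal (mpDensity y σ2 x) :=
    (measurable_mpDensity y σ2).ennreal_ofReal
  have hlt : ∀ᵐ x, ENNReal.ofReal (mpDensity y σ2 x) < ⊤ :=
    .of_forall fun _ ↦ ENNReal.ofReal_lt_top
  have htoReal (x : ℝ) : (ENNReal.ofReal (mpDensity y σ2 x)).toReal = mpDensity y σ2 x :=
    ENNReal.toReal_ofReal (mpDensity_nonneg hy.le hσ x)
  have hac : Integrable f (volume.withDensity fun x ↦ ENNReal.ofReal (mpDensity y σ2 x)) := by
    rw [integrable_withDensity_iff_integrable_smul' hm hlt]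
    simpa only [htoReal] using hf
  have hatom : Integrable f (ENNReal.ofReal (1 - 1 / y) • Measure.dirac 0) :=
    (integrable_dirac (by simp)).smul_measure ENNReal.ofReal_ne_top
  rw [mpLaw_eq hy, integral_add_measure hac hatom,
    integral_withDensity_eq_integral_toReal_smul hm hlt, integral_smul_measure, integral_dirac,
    ENNReal.toReal_ofReal']
  simp only [htoReal]

variable {z s : ℂ}

lemma sq_eq_sub_mpCenter_sq (hy : 0 ≤ y)
    (hs : s ^ 2 = (z - σ2 - y * σ2) ^ 2 - 4 * y * σ2 ^ 2) :
    s ^ 2 = (z - mpCenter y σ2) ^ 2 - (mpRadius y σ2 : ℂ) ^ 2 := by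
  have hR : (mpRadius y σ2 : ℂ) ^ 2 = 4 * y * σ2 ^ 2 := by exact_mod_cast mpRadius_sq hy σ2
  rw [hs, hR, mpCenter]
  push_cast
  ring

lemma inv_add_div_eq_sub_div_two (hy : y ≠ 0) (hσ : σ2 ≠ 0) (hz : z ≠ 0)
    (hs : s ^ 2 = (z - σ2 - y * σ2) ^ 2 - 4 * y * σ2 ^ 2) :
    ((σ2 * (1 - y) - z + s) / (2 * y * z * σ2))⁻¹ = (σ2 * (1 - y) - z - s) / 2 := by
  have hyC : (y : ℂ) ≠ 0 := ofReal_ne_zero.mpr hy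
  have hσC : (σ2 : ℂ) ≠ 0 := ofReal_ne_zero.mpr hσ
  apply inv_eq_of_mul_eq_one_right
  field_simp
  linear_combination -hs

lemma norm_sub_mpCenter_sub_lt (hy : 0 < y) (hσ : 0 < σ2) (hz : 0 < z.im)
    (hs : s ^ 2 = (z - σ2 - y * σ2) ^ 2 - 4 * y * σ2 ^ 2)
    (hbranch : 0 < ((σ2 * (1 - y) - z + s) / (2 * y * z * σ2)).im) :
    ‖z - mpCenter y σ2 - s‖ < mpRadius y σ2 := by
  have hz0 : z ≠ 0 := by rintro rfl; simp at hz
  have hzs : 0 < (z + s).im := by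
    have hinv : (((σ2 * (1 - y) - z + s) / (2 * y * z * σ2))⁻¹).im < 0 := by
      rw [inv_im, neg_div, neg_lt_zero]
      exact div_pos hbranch (normSq_pos.mpr fun h ↦ by simp [h] at hbranch)
    rw [inv_add_div_eq_sub_div_two hy.ne' hσ.ne' hz0 hs] at hinv
    have him : ((σ2 * (1 - y) - z - s) / 2).im = -(z + s).im / 2 := by
      simp only [div_ofNat_im, sub_im, add_im, mul_im, ofReal_re, ofReal_im, one_im]
      ring
    linarith
  refine norm_lt_of_mul_eq_sq (v := z - mpCenter y σ2 + s) (mpRadius_pos hy hσ) ?_ ?_ ?_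
  · linear_combination -sq_eq_sub_mpCenter_sq hy.le hs
  · simpa using hzs
  · simpa using hz

lemma integral_mpDensity_smul_inv_sub (hy : 0 < y) (hσ : 0 < σ2) (hz : z.im ≠ 0)
    (hs : s ^ 2 = (z - mpCenter y σ2) ^ 2 - (mpRadius y σ2 : ℂ) ^ 2)
    (hbranch : ‖z - mpCenter y σ2 - s‖ < mpRadius y σ2) :
    ∫ x : ℝ, mpDensity y σ2 x • ((x : ℂ) - z)⁻¹
      = (σ2 * |1 - y| - z + s) / (2 * y * z * σ2) := by
  have hI := integral_sqrt_div_mul_inv_sub (mpRadius_pos hy hσ)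
    (mpRadius_le_mpCenter hy.le hσ.le) hz hs hbranch
  rw [sqrt_mpCenter_sq_sub_mpRadius_sq hy.le hσ.le] at hI
  rw [integral_mpDensity_smul hy.le hσ.le]
  simp only [real_smul, ofReal_div]
  rw [hI]
  have hpi : (π : ℂ) ≠ 0 := ofReal_ne_zero.mpr Real.pi_ne_zero
  push_cast
  field

lemma integrable_mpDensity_smul_inv_sub (hy : 0 < y) (hσ : 0 < σ2) (hz : z.im ≠ 0)
    (hs : s ^ 2 = (z - mpCenter y σ2) ^ 2 - (mpRadius y σ2 : ℂ) ^ 2)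
    (hbranch : ‖z - mpCenter y σ2 - s‖ < mpRadius y σ2) :
    Integrable fun x : ℝ ↦ mpDensity y σ2 x • ((x : ℂ) - z)⁻¹ := by
  have hz0 : z ≠ 0 := by rintro rfl; exact hz zero_im
  have hyC : (y : ℂ) ≠ 0 := ofReal_ne_zero.mpr hy.ne'
  have hσC : (σ2 : ℂ) ≠ 0 := ofReal_ne_zero.mpr hσ.ne'
  refine .of_integral_ne_zero ?_
  rw [integral_mpDensity_smul_inv_sub hy hσ hz hs hbranch]
  refine div_ne_zero (fun hnum ↦ ?_) (by simp [hz0, hyC, hσC])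
  have habs : ((|1 - y| : ℝ) : ℂ) ^ 2 = (1 - y) ^ 2 := by exact_mod_cast sq_abs (1 - y)
  have hR : (mpRadius y σ2 : ℂ) ^ 2 = 4 * y * σ2 ^ 2 := by exact_mod_cast mpRadius_sq hy.le σ2
  have hprod : 2 * σ2 * z * (1 + y - ((|1 - y| : ℝ) : ℂ)) = 0 := by
    rw [hR, mpCenter] at hs
    push_cast at hs
    linear_combination hs - (s - (σ2 * ((|1 - y| : ℝ) : ℂ) - z)) * hnum - σ2 ^ 2 * habs
  have hlt : |1 - y| < 1 + y := abs_lt.mpr ⟨by linarith, by linarith⟩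
  have hne : (1 + y - ((|1 - y| : ℝ) : ℂ)) ≠ 0 := by exact_mod_cast (sub_pos.mpr hlt).ne'
  simp [hz0, hσC, hne] at hprod

lemma max_one_sub_one_div_zero (hy : 0 < y) :
    max (1 - 1 / y) 0 = (|1 - y| - (1 - y)) / (2 * y) := by
  rcases le_total y 1 with h | h
  · rw [max_eq_right (by rw [sub_nonpos, one_le_div hy]; exact h), abs_of_nonneg (by linarith)]
    simp
  · rw [max_eq_left (by rw [sub_nonneg, div_le_one hy]; exact h), abs_of_nonpos (by linarith)]
    field

end MarchenkoPastur

/-- The Stieltjes transform of the M-P law equals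
`(σ²(1-y) - z + √((z - σ² - yσ²)² - 4yσ⁴)) / (2yzσ²)`, the square root branch being
chosen so that the resulting value has positive imaginary part. -/
theorem stieltjes_transform_mpLaw (y σ2 : ℝ) (hy : 0 < y) (hσ : 0 < σ2)
    (z : ℂ) (hz : 0 < z.im) (s : ℂ)
    (hs : s ^ 2 = (z - σ2 - y * σ2) ^ 2 - 4 * y * σ2 ^ 2)
    (hbranch : 0 < ((σ2 * (1 - y) - z + s) / (2 * y * z * σ2)).im) :
    ∫ x : ℝ, ((x : ℂ) - z)⁻¹ ∂(mpLaw y σ2)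
      = (σ2 * (1 - y) - z + s) / (2 * y * z * σ2) := by
  have hs' := sq_eq_sub_mpCenter_sq hy.le hs
  have hbranch' := norm_sub_mpCenter_sub_lt hy hσ hz hs hbranch
  have hz0 : z ≠ 0 := by rintro rfl; simp at hz
  have hyC : (y : ℂ) ≠ 0 := ofReal_ne_zero.mpr hy.ne'
  have hσC : (σ2 : ℂ) ≠ 0 := ofReal_ne_zero.mpr hσ.ne'
  rw [integral_mpLaw hy hσ.le (integrable_mpDensity_smul_inv_sub hy hσ hz.ne' hs' hbranch'),
    integral_mpDensity_smul_inv_sub hy hσ hz.ne' hs' hbranch', max_one_sub_one_div_zero hy,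
    real_smul, ofReal_zero, zero_sub]
  push_cast
  field
end

section
/- Let A and B be p × n complex matrices and let F^S, F^{S̃} be the empirical spectral distributions of S = AA* and S̃ = BB*. Then L⁴(F^S, F^{S̃}) ≤ (2/p²)·tr(AA* + BB*)·tr((A-B)(A-B)*), where L denotes the Lévy distance between distribution functions. -/
open Matrix

/-- Empirical spectral distribution function of a Hermitian matrix. -/
noncomputable def ESD {p : ℕ} {M : Matrix (Fin p) (Fin p) ℂ}
    (hM : M.IsHermitian) (x : ℝ) : ℝ :=
  (Finset.univ.filter fun j => hM.eigenvalues j ≤ x).card / p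

/-- Lévy distance between two distribution functions. -/
noncomputable def levyDist (F G : ℝ → ℝ) : ℝ :=
  sInf {ε : ℝ | 0 < ε ∧ ∀ x : ℝ, F (x - ε) - ε ≤ G x ∧ G x ≤ F (x + ε) + ε}

/-!
Fix `x` and `ε > 0`, and let `V` be the intersection of the span of the eigenvectors of `BB*` with
eigenvalue at most `x - ε` and the span of those of `AA*` with eigenvalue above `x`. Counting
dimensions, `F^S̃(x - ε) ≤ F^S(x) + k / p` with `k = dim V`. Every unit vector `v` of `V` satisfies
`‖A*v‖² - ‖B*v‖² ≥ ε`; summing over an orthonormal basis of `V`, the Cauchy-Schwarz and Bessel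
inequalities give `(kε)² ≤ 2 tr(AA* + BB*) tr((A-B)(A-B)*)`. Hence `k ≤ pε` as soon as `ε⁴`
dominates the claimed bound, and by symmetry such an `ε` is admissible for the Lévy distance.
-/

open Module Submodule WithLp

lemma levyDist_nonneg (F G : ℝ → ℝ) : 0 ≤ levyDist F G :=
  Real.sInf_nonneg fun _ hε => hε.1.le

lemma levyDist_le_of_forall_sub_le {F G : ℝ → ℝ} {ε : ℝ} (hε : 0 < ε)
    (hFG : ∀ x, F (x - ε) - ε ≤ G x) (hGF : ∀ x, G (x - ε) - ε ≤ F x) : levyDist F G ≤ ε := by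
  refine csInf_le ⟨0, fun _ hδ => hδ.1.le⟩ ⟨hε, fun x => ⟨hFG x, ?_⟩⟩
  simpa only [add_sub_cancel_right, sub_le_iff_le_add] using hGF (x + ε)

lemma pow_le_of_forall_pos_of_le_pow {d R : ℝ} {k : ℕ} (hd : 0 ≤ d) (hR : 0 ≤ R) (hk : k ≠ 0)
    (h : ∀ ε, 0 < ε → R ≤ ε ^ k → d ≤ ε) : d ^ k ≤ R := by
  obtain ⟨r, hr, rfl⟩ : ∃ r : ℝ, 0 ≤ r ∧ r ^ k = R :=
    ⟨R ^ (k : ℝ)⁻¹, Real.rpow_nonneg hR _, Real.rpow_inv_natCast_pow hR hk⟩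
  have hdr : d ≤ r := le_of_forall_gt_imp_ge_of_dense fun ε hε =>
    h ε (hr.trans_lt hε) (pow_le_pow_left₀ hr hε.le k)
  exact pow_le_pow_left₀ hd hdr k

section CauchySchwarz

variable {E ι : Type*} [SeminormedAddCommGroup E] [Fintype ι]

lemma abs_norm_sq_sub_norm_sq_le (x y : E) :
    |‖x‖ ^ 2 - ‖y‖ ^ 2| ≤ (‖x‖ + ‖y‖) * ‖x - y‖ := by
  rw [sq_sub_sq, abs_mul, abs_of_nonneg (by positivity : 0 ≤ ‖x‖ + ‖y‖)]
  exact mul_le_mul_of_nonneg_left (abs_norm_sub_norm_le x y) (by positivity)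

lemma sq_sum_norm_sq_sub_norm_sq_le (x y : ι → E) :
    (∑ i, (‖x i‖ ^ 2 - ‖y i‖ ^ 2)) ^ 2 ≤
      2 * (∑ i, ‖x i‖ ^ 2 + ∑ i, ‖y i‖ ^ 2) * ∑ i, ‖x i - y i‖ ^ 2 := by
  have habs : |∑ i, (‖x i‖ ^ 2 - ‖y i‖ ^ 2)| ≤ ∑ i, (‖x i‖ + ‖y i‖) * ‖x i - y i‖ :=
    (Finset.abs_sum_le_sum_abs _ _).trans <|
      Finset.sum_le_sum fun i _ => abs_norm_sq_sub_norm_sq_le (x i) (y i)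
  have hadd : ∑ i, (‖x i‖ + ‖y i‖) ^ 2 ≤ 2 * (∑ i, ‖x i‖ ^ 2 + ∑ i, ‖y i‖ ^ 2) := by
    rw [← Finset.sum_add_distrib, Finset.mul_sum]
    exact Finset.sum_le_sum fun i _ => add_sq_le
  calc (∑ i, (‖x i‖ ^ 2 - ‖y i‖ ^ 2)) ^ 2
      ≤ (∑ i, (‖x i‖ + ‖y i‖) * ‖x i - y i‖) ^ 2 := sq_le_sq' (abs_le.1 habs).1 (abs_le.1 habs).2
    _ ≤ (∑ i, (‖x i‖ + ‖y i‖) ^ 2) * ∑ i, ‖x i - y i‖ ^ 2 :=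
        Finset.sum_mul_sq_le_sq_mul_sq _ _ _
    _ ≤ 2 * (∑ i, ‖x i‖ ^ 2 + ∑ i, ‖y i‖ ^ 2) * ∑ i, ‖x i - y i‖ ^ 2 := by gcongr

end CauchySchwarz

variable {𝕜 m n : Type*} [RCLike 𝕜] [Fintype m]

section FrobeniusNorm

variable [Fintype n]

lemma re_trace_mul_conjTranspose_self (A : Matrix m n 𝕜) :
    RCLike.re (A * Aᴴ).trace = ∑ j, ‖toLp 2 (A.col j)‖ ^ 2 := by
  simp only [EuclideanSpace.norm_sq_eq, trace, diag_apply, mul_apply, conjTranspose_apply,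
    map_sum, col_apply, RCLike.star_def, RCLike.mul_conj]
  rw [Finset.sum_comm]
  norm_cast

lemma re_trace_mul_conjTranspose_self_nonneg (A : Matrix m n 𝕜) :
    0 ≤ RCLike.re (A * Aᴴ).trace := by
  rw [re_trace_mul_conjTranspose_self]
  positivity

end FrobeniusNorm

variable [DecidableEq m]

section Bessel

lemma toEuclideanLin_conjTranspose_apply (A : Matrix m n 𝕜) (v : EuclideanSpace 𝕜 m) (j : n) :
    toEuclideanLin Aᴴ v j = inner 𝕜 (toLp 2 (A.col j)) v := by
  simp [EuclideanSpace.inner_eq_star_dotProduct, mulVec, dotProduct, mul_comm]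

variable {ι : Type*} [Fintype n] [Fintype ι] {v : ι → EuclideanSpace 𝕜 m}

lemma sum_norm_sq_toEuclideanLin_conjTranspose_le (A : Matrix m n 𝕜) (hv : Orthonormal 𝕜 v) :
    ∑ i, ‖toEuclideanLin Aᴴ (v i)‖ ^ 2 ≤ RCLike.re (A * Aᴴ).trace := by
  simp only [re_trace_mul_conjTranspose_self, EuclideanSpace.norm_sq_eq (toEuclideanLin Aᴴ _),
    toEuclideanLin_conjTranspose_apply, norm_inner_symm (toLp 2 (A.col _))]
  rw [Finset.sum_comm]
  exact Finset.sum_le_sum fun j _ => hv.sum_inner_products_le _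

lemma sq_sum_norm_sq_sub_norm_sq_le_trace (A B : Matrix m n 𝕜) (hv : Orthonormal 𝕜 v) :
    (∑ i, (‖toEuclideanLin Aᴴ (v i)‖ ^ 2 - ‖toEuclideanLin Bᴴ (v i)‖ ^ 2)) ^ 2 ≤
      2 * RCLike.re (A * Aᴴ + B * Bᴴ).trace * RCLike.re ((A - B) * (A - B)ᴴ).trace := by
  have hA := sum_norm_sq_toEuclideanLin_conjTranspose_le A hv
  have hB := sum_norm_sq_toEuclideanLin_conjTranspose_le B hv
  have hAB := sum_norm_sq_toEuclideanLin_conjTranspose_le (A - B) hv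
  have hsub (i : ι) : toEuclideanLin (A - B)ᴴ (v i) =
      toEuclideanLin Aᴴ (v i) - toEuclideanLin Bᴴ (v i) := by
    rw [conjTranspose_sub, map_sub, LinearMap.sub_apply]
  simp only [hsub] at hAB
  refine (sq_sum_norm_sq_sub_norm_sq_le _ _).trans ?_
  rw [trace_add, map_add]
  have := re_trace_mul_conjTranspose_self_nonneg A
  have := re_trace_mul_conjTranspose_self_nonneg B
  gcongr

end Bessel

section SpectralSubspace

variable {M N : Matrix m m 𝕜}

/-- The spectral subspace of a Hermitian matrix for a set `s` of reals: the span of the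
eigenvectors whose eigenvalue lies in `s`. -/
noncomputable def spectralSubspace (hM : M.IsHermitian) (s : Set ℝ) :
    Submodule 𝕜 (EuclideanSpace 𝕜 m) :=
  span 𝕜 (hM.eigenvectorBasis '' {j | hM.eigenvalues j ∈ s})

variable (hM : M.IsHermitian) (hN : N.IsHermitian)

lemma finrank_spectralSubspace (s : Set ℝ) [DecidablePred (· ∈ s)] :
    finrank 𝕜 (spectralSubspace hM s) =
      (Finset.univ.filter fun j => hM.eigenvalues j ∈ s).card := by
  rw [spectralSubspace, Set.image_eq_range, ← Fintype.card_subtype]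
  exact finrank_span_eq_card
    (hM.eigenvectorBasis.orthonormal.linearIndependent.comp _ Subtype.val_injective)

lemma inner_eigenvectorBasis_eq_zero_of_mem_spectralSubspace {s : Set ℝ} {v : EuclideanSpace 𝕜 m}
    (hv : v ∈ spectralSubspace hM s) {j : m} (hj : hM.eigenvalues j ∉ s) :
    inner 𝕜 (hM.eigenvectorBasis j) v = 0 := by
  obtain ⟨l, hl, rfl⟩ := (Finsupp.mem_span_image_iff_linearCombination 𝕜).1 hv
  exact inner_eq_zero_symm.1 (hM.eigenvectorBasis.orthonormal.inner_finsupp_eq_zero hj hl)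

lemma re_inner_toEuclideanLin_self_eq_sum_eigenvalues (v : EuclideanSpace 𝕜 m) :
    RCLike.re (inner 𝕜 v (toEuclideanLin M v)) =
      ∑ j, hM.eigenvalues j * ‖inner 𝕜 (hM.eigenvectorBasis j) v‖ ^ 2 := by
  have heig (j : m) : toEuclideanLin M (hM.eigenvectorBasis j) =
      (hM.eigenvalues j : 𝕜) • hM.eigenvectorBasis j := by
    ext i
    simpa [RCLike.real_smul_eq_coe_mul] using congrFun (hM.mulVec_eigenvectorBasis j) i
  rw [← hM.eigenvectorBasis.sum_inner_mul_inner, map_sum]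
  refine Finset.sum_congr rfl fun j _ => ?_
  rw [← isSymmetric_toEuclideanLin_iff.2 hM, heig, inner_smul_left, RCLike.conj_ofReal,
    mul_left_comm, RCLike.re_ofReal_mul, inner_mul_symm_re_eq_norm, norm_mul,
    norm_inner_symm v, sq]

lemma re_inner_le_of_mem_spectralSubspace {s : Set ℝ} {a : ℝ} (ha : a ∈ upperBounds s)
    {v : EuclideanSpace 𝕜 m} (hv : v ∈ spectralSubspace hM s) :
    RCLike.re (inner 𝕜 v (toEuclideanLin M v)) ≤ a * ‖v‖ ^ 2 := by
  rw [re_inner_toEuclideanLin_self_eq_sum_eigenvalues hM,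
    ← hM.eigenvectorBasis.sum_sq_norm_inner_right, Finset.mul_sum]
  refine Finset.sum_le_sum fun j _ => ?_
  by_cases hj : hM.eigenvalues j ∈ s
  · gcongr
    exact ha hj
  · simp [inner_eigenvectorBasis_eq_zero_of_mem_spectralSubspace hM hv hj]

lemma le_re_inner_of_mem_spectralSubspace {s : Set ℝ} {a : ℝ} (ha : a ∈ lowerBounds s)
    {v : EuclideanSpace 𝕜 m} (hv : v ∈ spectralSubspace hM s) :
    a * ‖v‖ ^ 2 ≤ RCLike.re (inner 𝕜 v (toEuclideanLin M v)) := by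
  rw [re_inner_toEuclideanLin_self_eq_sum_eigenvalues hM,
    ← hM.eigenvectorBasis.sum_sq_norm_inner_right, Finset.mul_sum]
  refine Finset.sum_le_sum fun j _ => ?_
  by_cases hj : hM.eigenvalues j ∈ s
  · gcongr
    exact ha hj
  · simp [inner_eigenvectorBasis_eq_zero_of_mem_spectralSubspace hM hv hj]

lemma card_eigenvalues_le_add_finrank_inf (a b : ℝ) :
    (Finset.univ.filter fun j => hM.eigenvalues j ≤ a).card ≤
      (Finset.univ.filter fun j => hN.eigenvalues j ≤ b).card +
        finrank 𝕜 ↥(spectralSubspace hM (Set.Iic a) ⊓ spectralSubspace hN (Set.Ioi b)) := by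
  have hdim := finrank_sup_add_finrank_inf_eq
    (spectralSubspace hM (Set.Iic a)) (spectralSubspace hN (Set.Ioi b))
  have hsup := (spectralSubspace hM (Set.Iic a) ⊔ spectralSubspace hN (Set.Ioi b)).finrank_le
  have hcompl := Finset.card_filter_add_card_filter_not (s := Finset.univ)
    fun j => hN.eigenvalues j ≤ b
  simp only [finrank_spectralSubspace, Set.mem_Iic, Set.mem_Ioi] at hdim
  simp only [finrank_euclideanSpace] at hsup
  simp only [not_le, Finset.card_univ] at hcompl
  omega

end SpectralSubspace

section GramMatrices

variable [Fintype n] (A B : Matrix m n 𝕜)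

lemma norm_sq_toEuclideanLin_conjTranspose (v : EuclideanSpace 𝕜 m) :
    ‖toEuclideanLin Aᴴ v‖ ^ 2 = RCLike.re (inner 𝕜 v (toEuclideanLin (A * Aᴴ) v)) := by
  classical
  rw [toLpLin_mul_same, LinearMap.comp_apply, ← inner_self_eq_norm_sq (𝕜 := 𝕜)]
  nth_rw 1 [toEuclideanLin_conjTranspose_eq_adjoint]
  rw [LinearMap.adjoint_inner_left]

lemma sub_le_norm_sq_sub_norm_sq_of_mem_spectralSubspace {a b : ℝ}
    {v : EuclideanSpace 𝕜 m} (hv : ‖v‖ = 1)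
    (hvA : v ∈ spectralSubspace (isHermitian_mul_conjTranspose_self A) (Set.Ioi b))
    (hvB : v ∈ spectralSubspace (isHermitian_mul_conjTranspose_self B) (Set.Iic a)) :
    b - a ≤ ‖toEuclideanLin Aᴴ v‖ ^ 2 - ‖toEuclideanLin Bᴴ v‖ ^ 2 := by
  have hA := le_re_inner_of_mem_spectralSubspace _ isGLB_Ioi.1 hvA
  have hB := re_inner_le_of_mem_spectralSubspace _ isGreatest_Iic.2 hvB
  rw [← norm_sq_toEuclideanLin_conjTranspose, hv] at hA hB
  linarith

lemma sq_finrank_inf_spectralSubspace_mul_le {a b : ℝ} (hab : a ≤ b) :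
    (finrank 𝕜 ↥(spectralSubspace (isHermitian_mul_conjTranspose_self B) (Set.Iic a) ⊓
        spectralSubspace (isHermitian_mul_conjTranspose_self A) (Set.Ioi b)) * (b - a)) ^ 2 ≤
      2 * RCLike.re (A * Aᴴ + B * Bᴴ).trace * RCLike.re ((A - B) * (A - B)ᴴ).trace := by
  set V := spectralSubspace (isHermitian_mul_conjTranspose_self B) (Set.Iic a) ⊓
    spectralSubspace (isHermitian_mul_conjTranspose_self A) (Set.Ioi b)
  let w := stdOrthonormalBasis 𝕜 V
  have hw : Orthonormal 𝕜 fun i => (w i : EuclideanSpace 𝕜 m) :=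
    w.orthonormal.comp_linearIsometry V.subtypeₗᵢ
  have hsum : finrank 𝕜 V * (b - a) ≤
      ∑ i, (‖toEuclideanLin Aᴴ (w i)‖ ^ 2 - ‖toEuclideanLin Bᴴ (w i)‖ ^ 2) := by
    simpa using Finset.card_nsmul_le_sum Finset.univ _ (b - a) fun i _ =>
      sub_le_norm_sq_sub_norm_sq_of_mem_spectralSubspace A B (hw.1 i) (w i).2.2 (w i).2.1
  have hnonneg : 0 ≤ finrank 𝕜 V * (b - a) := mul_nonneg (Nat.cast_nonneg _) (sub_nonneg.2 hab)
  exact (pow_le_pow_left₀ hnonneg hsum 2).trans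
    (sq_sum_norm_sq_sub_norm_sq_le_trace A B hw)

end GramMatrices

lemma ESD_sub_le {p n : ℕ} (hp : 0 < p) (A B : Matrix (Fin p) (Fin n) ℂ) {ε : ℝ} (hε : 0 < ε)
    (h : 2 * (A * Aᴴ + B * Bᴴ).trace.re * ((A - B) * (A - B)ᴴ).trace.re ≤ (p * ε * ε) ^ 2)
    (x : ℝ) :
    ESD (isHermitian_mul_conjTranspose_self B) (x - ε) - ε ≤
      ESD (isHermitian_mul_conjTranspose_self A) x := by
  have hcard := card_eigenvalues_le_add_finrank_inf (isHermitian_mul_conjTranspose_self B)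
    (isHermitian_mul_conjTranspose_self A) (x - ε) x
  set k := finrank ℂ ↥(spectralSubspace (isHermitian_mul_conjTranspose_self B)
    (Set.Iic (x - ε)) ⊓ spectralSubspace (isHermitian_mul_conjTranspose_self A) (Set.Ioi x))
  have hk : (k : ℝ) ≤ p * ε := by
    have hkε : (k * ε) ^ 2 ≤ (p * ε * ε) ^ 2 := by
      simpa only [sub_sub_cancel] using
        (sq_finrank_inf_spectralSubspace_mul_le A B (sub_le_self x hε.le)).trans h
    exact le_of_mul_le_mul_right (le_of_sq_le_sq hkε (by positivity)) hε
  have hp' : (0 : ℝ) < p := Nat.cast_pos.2 hp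
  rw [ESD, ESD, sub_le_iff_le_add, div_add' _ _ _ hp'.ne', mul_comm ε]
  gcongr
  exact (Nat.cast_le.2 hcard).trans (by rw [Nat.cast_add]; gcongr)

/-- `L⁴(F^{AA*}, F^{BB*}) ≤ (2/p²)·tr(AA* + BB*)·tr((A-B)(A-B)*)`. -/
theorem levy_distance_fourth_power_bound {p n : ℕ} (hp : 0 < p)
    (A B : Matrix (Fin p) (Fin n) ℂ) :
    levyDist (ESD (isHermitian_mul_conjTranspose_self A))
        (ESD (isHermitian_mul_conjTranspose_self B)) ^ 4 ≤
      (2 / (p : ℝ) ^ 2) * (A * Aᴴ + B * Bᴴ).trace.re *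
        ((A - B) * (A - B)ᴴ).trace.re := by
  have hR : 0 ≤ (2 / (p : ℝ) ^ 2) * (A * Aᴴ + B * Bᴴ).trace.re *
      ((A - B) * (A - B)ᴴ).trace.re := by
    rw [trace_add]
    exact mul_nonneg (mul_nonneg (by positivity) (add_nonneg
      (re_trace_mul_conjTranspose_self_nonneg A) (re_trace_mul_conjTranspose_self_nonneg B)))
      (re_trace_mul_conjTranspose_self_nonneg (A - B))
  refine pow_le_of_forall_pos_of_le_pow (levyDist_nonneg _ _) hR four_ne_zero fun ε hε hRε => ?_
  have hAB : 2 * (A * Aᴴ + B * Bᴴ).trace.re * ((A - B) * (A - B)ᴴ).trace.re ≤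
      (p * ε * ε) ^ 2 := by
    field_simp at hRε
    linarith
  have hBA : 2 * (B * Bᴴ + A * Aᴴ).trace.re * ((B - A) * (B - A)ᴴ).trace.re ≤
      (p * ε * ε) ^ 2 := by
    rwa [add_comm, ← neg_sub, conjTranspose_neg, Matrix.neg_mul, Matrix.mul_neg, neg_neg]
  exact levyDist_le_of_forall_sub_le hε (ESD_sub_le hp B A hε hBA) (ESD_sub_le hp A B hε hAB)
end

section
/- Let {X_k}_{k=1}^n be a complex-valued martingale difference sequence with respect to an increasing filtration. Then for every p > 1 there is a constant K_p depending only on p such that E|Σ_{k=1}^n X_k|^p ≤ K_p · E(Σ_{k=1}^n |X_k|²)^{p/2}. -/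
open MeasureTheory

/-!
Let `q = p / 2`, let `x` be a partial sum of the martingale, `t` the corresponding sum of the
`‖X k‖ ^ 2`, and `r = ‖x‖ ^ 2 + t`. Adding a difference `d` changes `r` into
`r + 2 * ⟪x, d⟫ + 2 * ‖d‖ ^ 2`, and a Taylor expansion shows that `r ^ q` grows by at most
`2 * q * r ^ (q - 1) * ⟪x, d⟫ + C * (r + ‖d‖ ^ 2) ^ (q - 1) * ‖d‖ ^ 2`. The linear term has integral
zero, and the error is compensated by a Bellman function
`U = r ^ q - A * t * r ^ (q - 1) - K * t ^ q`. For `q ≤ 1` the power `r ^ (q - 1)` is decreasing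
in `r`, so the growth of `t ^ q` suffices and `A = 0`; for `q ≥ 1` the growth of `t` in the cross
term `t * r ^ (q - 1)` absorbs the error, and that of `t ^ q` absorbs the error made in the cross
term itself. Hence `∫ U ≤ 0`, and `r ^ q ≤ 2 * U + C * t ^ q` gives the inequality.
-/

section RealPower

lemma self_mul_rpow_sub_one {x q : ℝ} (hx : 0 ≤ x) (hq : q ≠ 0) : x * x ^ (q - 1) = x ^ q := by
  rw [← Real.rpow_one_add' hx (by simpa using hq), add_sub_cancel]

lemma mul_rpow_sub_one_le {t r : ℝ} (ht : 0 ≤ t) (htr : t ≤ r) (q : ℝ) :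
    t * r ^ (q - 1) ≤ r ^ q := by
  rcases eq_or_ne q 0 with rfl | hq
  · simpa [Real.rpow_neg_one, ← div_eq_mul_inv] using div_le_one_of_le₀ htr (ht.trans htr)
  · rw [← self_mul_rpow_sub_one (ht.trans htr) hq]
    have hr : 0 ≤ r := ht.trans htr
    gcongr

lemma mul_rpow_sub_one_le_of_le_one {q t r : ℝ} (ht : 0 ≤ t) (htr : t ≤ r) (hq : q ≤ 1) :
    t * r ^ (q - 1) ≤ t ^ q := by
  rcases ht.eq_or_lt with rfl | ht
  · simpa using Real.rpow_nonneg le_rfl q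
  · calc t * r ^ (q - 1) ≤ t * t ^ (q - 1) := by
          gcongr ?_ * ?_
          exact Real.rpow_le_rpow_of_nonpos ht htr (by linarith)
      _ = t ^ q := by rw [Real.rpow_sub_one ht.ne']; field_simp

lemma exists_abs_one_add_rpow_sub_le {q : ℝ} (hq : 0 ≤ q) (M : ℝ) :
    ∃ C, 0 ≤ C ∧ ∀ z ∈ Set.Icc (-1) M, |(1 + z) ^ q - (1 + q * z)| ≤ C * z ^ 2 := by
  have hnear : (fun z : ℝ => (1 + z) ^ q - (1 + q * z)) =O[nhds 0] fun z => ‖z‖ ^ 2 := by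
    simpa [FormalMultilinearSeries.partialSum, Finset.sum_range_succ, binomialSeries,
      mul_comm q] using
      (Real.one_add_rpow_hasFPowerSeriesAt_zero (a := q)).isBigO_sub_partialSum_pow 2
  obtain ⟨C₀, hC₀, hnear⟩ := hnear.exists_nonneg
  obtain ⟨ε, hε, hball⟩ := Metric.eventually_nhds_iff.1 hnear.bound
  have hcont : Continuous fun z : ℝ => (1 + z) ^ q - (1 + q * z) := by
    fun_prop (disch := assumption)
  obtain ⟨B, hB⟩ := isCompact_Icc.exists_bound_of_continuousOn (s := Set.Icc (-1) M)
    hcont.continuousOn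
  refine ⟨C₀ + |B| / ε ^ 2, by positivity, fun z hz => ?_⟩
  rw [add_mul]
  rcases lt_or_ge |z| ε with hzε | hzε
  · have := hball (y := z) (by simpa using hzε)
    simp only [Real.norm_eq_abs, sq_abs, abs_pow] at this
    exact this.trans (le_add_of_nonneg_right (by positivity))
  · have hεz : 1 ≤ z ^ 2 / ε ^ 2 := by
      rw [one_le_div (by positivity), ← sq_abs z]
      gcongr
    calc |(1 + z) ^ q - (1 + q * z)| ≤ |B| := (hB z hz).trans (le_abs_self B)
      _ ≤ |B| * (z ^ 2 / ε ^ 2) := le_mul_of_one_le_right (abs_nonneg B) hεz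
      _ = |B| / ε ^ 2 * z ^ 2 := by ring
      _ ≤ C₀ * z ^ 2 + |B| / ε ^ 2 * z ^ 2 := le_add_of_nonneg_left (by positivity)

lemma rpow_add_mul_rpow_sub_one_le_of_one_le {q t e : ℝ} (hq : 1 ≤ q) (ht : 0 ≤ t) (he : 0 ≤ e) :
    t ^ q + (t + e) ^ (q - 1) * e ≤ (t + e) ^ q := by
  have hq0 : q ≠ 0 := by linarith
  have hmono : t ^ (q - 1) ≤ (t + e) ^ (q - 1) :=
    Real.rpow_le_rpow ht (by linarith) (by linarith)
  calc t ^ q + (t + e) ^ (q - 1) * e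
      ≤ t * (t + e) ^ (q - 1) + (t + e) ^ (q - 1) * e := by
        rw [← self_mul_rpow_sub_one ht hq0]
        gcongr
    _ = (t + e) ^ q := by rw [← self_mul_rpow_sub_one (add_nonneg ht he) hq0]; ring

lemma rpow_add_mul_rpow_sub_one_le_of_le_one {q t e : ℝ} (hq : 0 < q) (hq1 : q ≤ 1) (ht : 0 ≤ t)
    (he : 0 ≤ e) : t ^ q + q * ((t + e) ^ (q - 1) * e) ≤ (t + e) ^ q := by
  rcases (add_nonneg ht he).eq_or_lt' with hte | hte
  · obtain ⟨rfl, rfl⟩ := (add_eq_zero_iff_of_nonneg ht he).1 hte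
    simp
  have hbern := rpow_one_add_le_one_add_mul_self (s := -e / (t + e))
    (by rw [le_div_iff₀ hte]; linarith) hq.le hq1
  have hratio : 1 + -e / (t + e) = t / (t + e) := by field_simp; ring
  rw [hratio, Real.div_rpow ht hte.le, div_le_iff₀ (by positivity)] at hbern
  calc t ^ q + q * ((t + e) ^ (q - 1) * e)
      ≤ (1 + q * (-e / (t + e))) * (t + e) ^ q + q * ((t + e) ^ (q - 1) * e) := by gcongr
    _ = (t + e) ^ q := by rw [Real.rpow_sub_one hte.ne']; field_simp; ring

end RealPower

section Increment

lemma two_mul_abs_le_add {r e b : ℝ} (hr : 0 ≤ r) (he : 0 ≤ e) (hb : b ^ 2 ≤ r * e) :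
    2 * |b| ≤ r + e := by
  have : |b| ≤ (r + e) / 2 := abs_le_of_sq_le_sq (by nlinarith [sq_nonneg (r - e)]) (by linarith)
  linarith

lemma add_le_three_mul_increment {r e b : ℝ} (hr : 0 ≤ r) (he : 0 ≤ e) (hb : b ^ 2 ≤ r * e) :
    r + e ≤ 3 * (r + 2 * b + 2 * e) := by
  have h1 := two_mul_abs_le_add hr he hb
  have h2 := two_mul_abs_le_add (r := r / 2) (e := 2 * e) (b := b) (by linarith) (by linarith)
    (by linarith)
  linarith [neg_abs_le b]

lemma rpow_sub_one_mul_abs_le {q r e b : ℝ} (hq : 1 / 2 ≤ q) (hr : 0 ≤ r) (he : 0 ≤ e)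
    (hb : b ^ 2 ≤ r * e) : r ^ (q - 1) * |b| ≤ (r + e) ^ q := by
  rcases hr.eq_or_lt with rfl | hr
  · obtain rfl : b = 0 := by simpa using hb
    simpa using Real.rpow_nonneg he q
  calc r ^ (q - 1) * |b| ≤ r ^ (q - 1) * (r ^ (1 / 2 : ℝ) * e ^ (1 / 2 : ℝ)) := by
        rw [← Real.mul_rpow hr.le he, ← Real.sqrt_eq_rpow]
        gcongr
        exact Real.abs_le_sqrt hb
    _ = r ^ (q - 1 / 2) * e ^ (1 / 2 : ℝ) := by
        rw [← mul_assoc, ← Real.rpow_add hr]; ring_nf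
    _ ≤ (r + e) ^ (q - 1 / 2) * (r + e) ^ (1 / 2 : ℝ) := by
        gcongr <;> linarith
    _ = (r + e) ^ q := by rw [← Real.rpow_add (by linarith)]; ring_nf

lemma exists_abs_rpow_increment_sub_le {q : ℝ} (hq : 0 ≤ q) :
    ∃ C, 0 ≤ C ∧ ∀ r e b : ℝ, 0 < r → 0 ≤ e → e ≤ r → b ^ 2 ≤ r * e →
      |(r + 2 * b + 2 * e) ^ q - (r ^ q + 2 * q * r ^ (q - 1) * b)| ≤ C * (r ^ (q - 1) * e) := by
  obtain ⟨C, hC, htaylor⟩ := exists_abs_one_add_rpow_sub_le hq 4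
  refine ⟨16 * C + 2 * q, by positivity, fun r e b hr he her hb => ?_⟩
  have habs := two_mul_abs_le_add hr.le he hb
  obtain ⟨hb1, hb2⟩ := abs_le.1 (le_refl |b|)
  obtain ⟨z, hz⟩ : ∃ z, r * z = 2 * b + 2 * e := ⟨(2 * b + 2 * e) / r, by field_simp⟩
  have hz_mem : z ∈ Set.Icc (-1) 4 := by constructor <;> nlinarith
  have hz_sq : r * z ^ 2 ≤ 16 * e := by
    refine le_of_mul_le_mul_left ?_ hr
    calc r * (r * z ^ 2) = (2 * b + 2 * e) ^ 2 := by rw [← hz]; ring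
      _ ≤ r * (16 * e) := by nlinarith [sq_nonneg (b - e)]
  have hpow : (r + 2 * b + 2 * e) ^ q = r ^ q * (1 + z) ^ q := by
    rw [← Real.mul_rpow hr.le (by linarith [hz_mem.1]), mul_one_add, hz, add_assoc]
  have hr_pow : r ^ q = r ^ (q - 1) * r := by rw [Real.rpow_sub_one hr.ne']; field_simp
  have hrem : |r ^ q * ((1 + z) ^ q - (1 + q * z))| ≤ 16 * C * (r ^ (q - 1) * e) := by
    calc |r ^ q * ((1 + z) ^ q - (1 + q * z))| ≤ r ^ q * (C * z ^ 2) := by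
          rw [abs_mul, abs_of_nonneg (by positivity : 0 ≤ r ^ q)]
          gcongr
          exact htaylor z hz_mem
      _ = C * r ^ (q - 1) * (r * z ^ 2) := by rw [hr_pow]; ring
      _ ≤ C * r ^ (q - 1) * (16 * e) := by gcongr
      _ = 16 * C * (r ^ (q - 1) * e) := by ring
  calc |(r + 2 * b + 2 * e) ^ q - (r ^ q + 2 * q * r ^ (q - 1) * b)|
      = |r ^ q * ((1 + z) ^ q - (1 + q * z)) + 2 * q * (r ^ (q - 1) * e)| := by
        rw [hpow]
        congr 1
        linear_combination q * r ^ (q - 1) * hz + q * z * hr_pow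
    _ ≤ 16 * C * (r ^ (q - 1) * e) + 2 * q * (r ^ (q - 1) * e) := by
        refine (abs_add_le _ _).trans (add_le_add hrem (abs_of_nonneg ?_).le)
        positivity
    _ = (16 * C + 2 * q) * (r ^ (q - 1) * e) := by ring

lemma rpow_increment_le_of_le {q r e b : ℝ} (hq : 1 / 2 ≤ q) (hr : 0 ≤ r) (hre : r ≤ e)
    (hb : b ^ 2 ≤ r * e) :
    (r + 2 * b + 2 * e) ^ q ≤
      r ^ q + 2 * q * r ^ (q - 1) * b + 2 * (3 ^ q + 2 * q) * ((r + e) ^ (q - 1) * e) := by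
  have he : 0 ≤ e := hr.trans hre
  have hmain : (r + 2 * b + 2 * e) ^ q ≤ 3 ^ q * (r + e) ^ q := by
    have habs := two_mul_abs_le_add hr he hb
    rw [← Real.mul_rpow (by norm_num) (by linarith)]
    apply Real.rpow_le_rpow <;> linarith [neg_abs_le b, le_abs_self b]
  have hlin : -(2 * q * r ^ (q - 1) * b) ≤ 2 * q * (r + e) ^ q := by
    calc -(2 * q * r ^ (q - 1) * b) = 2 * q * (r ^ (q - 1) * -b) := by ring
      _ ≤ 2 * q * (r ^ (q - 1) * |b|) := by gcongr; exact neg_le_abs b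
      _ ≤ 2 * q * (r + e) ^ q := by gcongr; exact rpow_sub_one_mul_abs_le hq hr he hb
  have hjump : (r + e) ^ q ≤ 2 * e * (r + e) ^ (q - 1) := by
    rw [← self_mul_rpow_sub_one (add_nonneg hr he) (by linarith : q ≠ 0)]
    gcongr
    linarith
  have hsum : (3 ^ q + 2 * q) * (r + e) ^ q ≤
      (3 ^ q + 2 * q) * (2 * e * (r + e) ^ (q - 1)) := by gcongr
  linarith [Real.rpow_nonneg hr q]

lemma exists_rpow_increment_le {q : ℝ} (hq : 1 / 2 ≤ q) :
    ∃ C, 0 ≤ C ∧ ∀ r e b : ℝ, 0 ≤ r → 0 ≤ e → b ^ 2 ≤ r * e →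
      (r + 2 * b + 2 * e) ^ q ≤
        r ^ q + 2 * q * r ^ (q - 1) * b + C * ((r + e) ^ (q - 1) * e) := by
  have hq0 : 0 < q := by linarith
  obtain ⟨C, hC, hsmall⟩ := exists_abs_rpow_increment_sub_le hq0.le
  refine ⟨2 * (3 ^ q + 2 * q) + 2 * C, by positivity, fun r e b hr he hb => ?_⟩
  rw [add_mul _ (2 * C)]
  rcases le_or_gt r e with hre | her
  · have hrem : 0 ≤ 2 * C * ((r + e) ^ (q - 1) * e) := by positivity
    linarith [rpow_increment_le_of_le hq hr hre hb]
  · have hr0 : 0 < r := he.trans_lt her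
    have hr_pow : r ^ (q - 1) ≤ 2 * (r + e) ^ (q - 1) := by
      refine le_of_mul_le_mul_left ?_ hr0
      calc r * r ^ (q - 1) ≤ (r + e) ^ q := by
            rw [self_mul_rpow_sub_one hr hq0.ne']
            gcongr
            linarith
        _ = (r + e) * (r + e) ^ (q - 1) :=
            (self_mul_rpow_sub_one (add_nonneg hr he) hq0.ne').symm
        _ ≤ (r + r) * (r + e) ^ (q - 1) := by gcongr
        _ = r * (2 * (r + e) ^ (q - 1)) := by ring
    have hrem : C * (r ^ (q - 1) * e) ≤ C * (2 * (r + e) ^ (q - 1) * e) := by gcongr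
    have hrest : 0 ≤ 2 * (3 ^ q + 2 * q) * ((r + e) ^ (q - 1) * e) := by positivity
    linarith [(abs_le.1 (hsmall r e b hr0 he her.le hb)).2]

lemma rpow_increment_ge_of_one_le {s r e b : ℝ} (hs : 1 ≤ s) (hr : 0 ≤ r) (he : 0 ≤ e)
    (hb : b ^ 2 ≤ r * e) :
    r ^ s + 2 * s * r ^ (s - 1) * b ≤ (r + 2 * b + 2 * e) ^ s := by
  have hnext : 0 ≤ r + 2 * b + 2 * e := by linarith [add_le_three_mul_increment hr he hb]
  rcases hr.eq_or_lt with rfl | hr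
  · obtain rfl : b = 0 := by simpa using hb
    simpa [Real.zero_rpow (by linarith : s ≠ 0)] using Real.rpow_nonneg (by linarith) s
  have hz : -1 ≤ (2 * b + 2 * e) / r := by rw [le_div_iff₀ hr]; linarith
  calc r ^ s + 2 * s * r ^ (s - 1) * b ≤ r ^ s + 2 * s * r ^ (s - 1) * (b + e) := by
        gcongr; linarith
    _ = r ^ s * (1 + s * ((2 * b + 2 * e) / r)) := by
        rw [Real.rpow_sub_one hr.ne']; field_simp
    _ ≤ r ^ s * (1 + (2 * b + 2 * e) / r) ^ s := by
        gcongr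
        exact one_add_mul_self_le_rpow_one_add hz hs
    _ = (r + 2 * b + 2 * e) ^ s := by
        rw [← Real.mul_rpow hr.le (by linarith), mul_one_add, mul_div_cancel₀ _ hr.ne', add_assoc]

lemma exists_mul_rpow_increment_ge_of_le_one {s : ℝ} (hs : 0 ≤ s) (hs1 : s ≤ 1) :
    ∃ C, 0 ≤ C ∧ ∀ r t e b : ℝ, 0 ≤ t → t ≤ r → 0 ≤ e → b ^ 2 ≤ r * e →
      t * (r ^ s + 2 * s * r ^ (s - 1) * b) ≤
        t * (r + 2 * b + 2 * e) ^ s + C * ((t + e) ^ s * e) := by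
  obtain ⟨C, hC, hsmall⟩ := exists_abs_rpow_increment_sub_le hs
  refine ⟨C + (1 + 2 * s), by positivity, fun r t e b ht htr he hb => ?_⟩
  have hr : 0 ≤ r := ht.trans htr
  rw [add_mul C]
  rcases le_or_gt r e with hre | her
  · have hbe : b ≤ e := (abs_le_of_sq_le_sq' (by nlinarith) he).2
    have hr_pow : r ^ s ≤ (t + e) ^ s := Real.rpow_le_rpow hr (by linarith) hs
    have hconst : t * r ^ s ≤ e * (t + e) ^ s := by gcongr; exact htr.trans hre
    have hlin : 2 * s * (t * r ^ (s - 1) * b) ≤ 2 * s * ((t + e) ^ s * e) := by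
      calc 2 * s * (t * r ^ (s - 1) * b) ≤ 2 * s * (t * r ^ (s - 1) * e) := by gcongr
        _ ≤ 2 * s * ((t + e) ^ s * e) := by
          gcongr
          exact (mul_rpow_sub_one_le ht htr s).trans hr_pow
    have hnext : 0 ≤ t * (r + 2 * b + 2 * e) ^ s :=
      mul_nonneg ht (Real.rpow_nonneg (by linarith [add_le_three_mul_increment hr he hb]) s)
    have hrem : 0 ≤ C * ((t + e) ^ s * e) := by positivity
    linarith
  · have htaylor := (abs_le.1 (hsmall r e b (he.trans_lt her) he her.le hb)).1
    have hpow : t * r ^ (s - 1) ≤ (t + e) ^ s :=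
      (mul_rpow_sub_one_le_of_le_one ht htr hs1).trans (by gcongr; linarith)
    have hrest : 0 ≤ (1 + 2 * s) * ((t + e) ^ s * e) := by positivity
    calc t * (r ^ s + 2 * s * r ^ (s - 1) * b)
        ≤ t * ((r + 2 * b + 2 * e) ^ s + C * (r ^ (s - 1) * e)) :=
          mul_le_mul_of_nonneg_left (by linarith) ht
      _ = t * (r + 2 * b + 2 * e) ^ s + C * (t * r ^ (s - 1) * e) := by ring
      _ ≤ t * (r + 2 * b + 2 * e) ^ s + C * ((t + e) ^ s * e) := by gcongr
      _ ≤ _ := by linarith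

lemma exists_mul_rpow_increment_ge {s : ℝ} (hs : 0 ≤ s) :
    ∃ C, 0 ≤ C ∧ ∀ r t e b : ℝ, 0 ≤ t → t ≤ r → 0 ≤ e → b ^ 2 ≤ r * e →
      t * (r ^ s + 2 * s * r ^ (s - 1) * b) ≤
        t * (r + 2 * b + 2 * e) ^ s + C * ((t + e) ^ s * e) := by
  rcases le_total s 1 with hs1 | hs1
  · exact exists_mul_rpow_increment_ge_of_le_one hs hs1
  · refine ⟨0, le_rfl, fun r t e b ht htr he hb => ?_⟩
    rw [zero_mul, add_zero]
    gcongr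
    exact rpow_increment_ge_of_one_le hs1 (ht.trans htr) he hb

end Increment

section BellmanFunction

/-- The Bellman function of the proof. It is evaluated at `r = ‖x‖ ^ 2 + t`, where `x` is the value
of the martingale and `t` that of its squared square function; keeping `r` in place of `‖x‖ ^ 2` as
the variable makes `r ^ (q - 1)` compatible with the jumps of the martingale near `x = 0`. -/
noncomputable def burkholderFun (q A K r t : ℝ) : ℝ :=
  r ^ q - A * (t * r ^ (q - 1)) - K * t ^ q

/-- Twice the partial derivative of `burkholderFun` in `r`: the coefficient of `⟪x, d⟫` in its
increment when the martingale moves from `x` to `x + d`. -/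
noncomputable def burkholderSlope (q A r t : ℝ) : ℝ :=
  2 * (q * r ^ (q - 1) - A * (q - 1) * (t * r ^ (q - 1 - 1)))

/-- The parameters for which `burkholderFun` lies below its linearisation along every increment `d`
of the martingale, which makes it a supermartingale. Here `e` and `b` stand for `‖d‖ ^ 2` and
`⟪x, d⟫`. -/
structure BurkholderAdmissible (q A K : ℝ) : Prop where
  nonneg_left : 0 ≤ A
  nonneg_right : 0 ≤ K
  step_le : ∀ r t e b : ℝ, 0 ≤ t → t ≤ r → 0 ≤ e → b ^ 2 ≤ r * e →
    burkholderFun q A K (r + 2 * b + 2 * e) (t + e) ≤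
      burkholderFun q A K r t + burkholderSlope q A r t * b

lemma abs_burkholderFun_le {q A K r t : ℝ} (hq : 0 ≤ q) (hA : 0 ≤ A) (hK : 0 ≤ K) (ht : 0 ≤ t)
    (htr : t ≤ r) : |burkholderFun q A K r t| ≤ (1 + A + K) * r ^ q := by
  have hr : 0 ≤ r := ht.trans htr
  have hcross_le := mul_le_mul_of_nonneg_left (mul_rpow_sub_one_le ht htr q) hA
  have hpow_le := mul_le_mul_of_nonneg_left (Real.rpow_le_rpow ht htr hq) hK
  have hcross : 0 ≤ A * (t * r ^ (q - 1)) := by positivity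
  have hpow : 0 ≤ K * t ^ q := by positivity
  have hr_pow : 0 ≤ r ^ q := by positivity
  rw [burkholderFun, abs_le]
  constructor <;> linarith

lemma abs_burkholderSlope_le {q A r t : ℝ} (hq : 0 ≤ q) (hA : 0 ≤ A) (ht : 0 ≤ t) (htr : t ≤ r) :
    |burkholderSlope q A r t| ≤ 2 * (q + A * |q - 1|) * r ^ (q - 1) := by
  have hr : 0 ≤ r := ht.trans htr
  have hcross := mul_rpow_sub_one_le ht htr (q - 1)
  calc |burkholderSlope q A r t|
      ≤ 2 * (|q * r ^ (q - 1)| + |A * (q - 1) * (t * r ^ (q - 1 - 1))|) := by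
        rw [burkholderSlope, abs_mul, abs_two]
        gcongr
        exact abs_sub _ _
    _ = 2 * (q * r ^ (q - 1) + A * |q - 1| * (t * r ^ (q - 1 - 1))) := by
        rw [abs_of_nonneg (by positivity : 0 ≤ q * r ^ (q - 1)), abs_mul, abs_mul,
          abs_of_nonneg (by positivity : 0 ≤ t * r ^ (q - 1 - 1)), abs_of_nonneg hA]
    _ ≤ 2 * (q * r ^ (q - 1) + A * |q - 1| * r ^ (q - 1)) := by gcongr
    _ = 2 * (q + A * |q - 1|) * r ^ (q - 1) := by ring

lemma abs_burkholderSlope_mul_le {q A r t e b : ℝ} (hq : 1 / 2 ≤ q) (hA : 0 ≤ A) (ht : 0 ≤ t)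
    (htr : t ≤ r) (he : 0 ≤ e) (hb : b ^ 2 ≤ r * e) :
    |burkholderSlope q A r t * b| ≤ 2 * (q + A * |q - 1|) * (r + e) ^ q := by
  calc |burkholderSlope q A r t * b| ≤ 2 * (q + A * |q - 1|) * r ^ (q - 1) * |b| := by
        rw [abs_mul]
        gcongr
        exact abs_burkholderSlope_le (by linarith) hA ht htr
    _ = 2 * (q + A * |q - 1|) * (r ^ (q - 1) * |b|) := by ring
    _ ≤ 2 * (q + A * |q - 1|) * (r + e) ^ q := by
        have : 0 ≤ q := by linarith
        gcongr
        exact rpow_sub_one_mul_abs_le hq (ht.trans htr) he hb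

lemma rpow_le_two_mul_burkholderFun_add {q A r t : ℝ} (K : ℝ) (hq : 0 ≤ q) (hA : 0 ≤ A)
    (ht : 0 ≤ t) (htr : t ≤ r) :
    r ^ q ≤ 2 * burkholderFun q A K r t + (2 * K + (1 + 2 * A) * (2 * A) ^ q) * t ^ q := by
  have hr : 0 ≤ r := ht.trans htr
  rw [burkholderFun]
  rcases le_total (2 * A * t) r with h | h
  · have hcross : 2 * A * t * r ^ (q - 1) ≤ r ^ q := mul_rpow_sub_one_le (by positivity) h q
    have hrest : 0 ≤ (1 + 2 * A) * (2 * A) ^ q * t ^ q := by positivity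
    linarith
  · have hr_pow : r ^ q ≤ (2 * A) ^ q * t ^ q := by
      rw [← Real.mul_rpow (by positivity) ht]
      gcongr
    have hcross : A * (t * r ^ (q - 1)) ≤ A * ((2 * A) ^ q * t ^ q) := by
      gcongr ?_ * ?_
      exact (mul_rpow_sub_one_le ht htr q).trans hr_pow
    linarith [Real.rpow_nonneg hr q]

lemma exists_burkholderAdmissible_of_le_one {q : ℝ} (hq : 1 / 2 ≤ q) (hq1 : q ≤ 1) :
    ∃ A K, BurkholderAdmissible q A K := by
  have hq0 : 0 < q := by linarith
  obtain ⟨C, hC, hincr⟩ := exists_rpow_increment_le hq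
  refine ⟨0, C / q, le_rfl, by positivity, fun r t e b ht htr he hb => ?_⟩
  have hpow : (r + e) ^ (q - 1) * e ≤ (t + e) ^ (q - 1) * e := by
    rcases he.eq_or_lt with rfl | he
    · simp
    · gcongr ?_ * e
      exact Real.rpow_le_rpow_of_nonpos (by linarith) (by linarith) (by linarith)
  have hcomp : C * ((r + e) ^ (q - 1) * e) ≤ C / q * (t + e) ^ q - C / q * t ^ q := by
    calc C * ((r + e) ^ (q - 1) * e) ≤ C * ((t + e) ^ (q - 1) * e) := by gcongr
      _ = C / q * (q * ((t + e) ^ (q - 1) * e)) := by field_simp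
      _ ≤ C / q * ((t + e) ^ q - t ^ q) := by
        gcongr
        linarith [rpow_add_mul_rpow_sub_one_le_of_le_one hq0 hq1 ht he]
      _ = C / q * (t + e) ^ q - C / q * t ^ q := by ring
  simp only [burkholderFun, burkholderSlope]
  linarith [hincr r e b (ht.trans htr) he hb]

lemma exists_burkholderAdmissible_of_one_le {q : ℝ} (hq : 1 ≤ q) :
    ∃ A K, BurkholderAdmissible q A K := by
  have hs : 0 ≤ q - 1 := by linarith
  obtain ⟨C, hC, hincr⟩ := exists_rpow_increment_le (by linarith : 1 / 2 ≤ q)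
  obtain ⟨D, hD, hcross⟩ := exists_mul_rpow_increment_ge hs
  refine ⟨C * 3 ^ (q - 1), C * 3 ^ (q - 1) * D, by positivity, by positivity,
    fun r t e b ht htr he hb => ?_⟩
  have hr := ht.trans htr
  have hgain : C * ((r + e) ^ (q - 1) * e) ≤
      C * 3 ^ (q - 1) * (e * (r + 2 * b + 2 * e) ^ (q - 1)) := by
    have hnext := add_le_three_mul_increment hr he hb
    calc C * ((r + e) ^ (q - 1) * e) ≤ C * ((3 * (r + 2 * b + 2 * e)) ^ (q - 1) * e) := by gcongr
      _ = C * 3 ^ (q - 1) * (e * (r + 2 * b + 2 * e) ^ (q - 1)) := by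
        rw [Real.mul_rpow (by norm_num) (by linarith)]; ring
  have hloss := mul_le_mul_of_nonneg_left (hcross r t e b ht htr he hb)
    (by positivity : 0 ≤ C * 3 ^ (q - 1))
  have hcomp := mul_le_mul_of_nonneg_left (rpow_add_mul_rpow_sub_one_le_of_one_le hq ht he)
    (by positivity : 0 ≤ C * 3 ^ (q - 1) * D)
  simp only [burkholderFun, burkholderSlope]
  linarith [hincr r e b hr he hb]

lemma exists_burkholderAdmissible {q : ℝ} (hq : 1 / 2 ≤ q) : ∃ A K, BurkholderAdmissible q A K :=
  (le_total q 1).elim (exists_burkholderAdmissible_of_le_one hq)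
    exists_burkholderAdmissible_of_one_le

end BellmanFunction

section Martingale

open Finset

variable {Ω E : Type*} [NormedAddCommGroup E]

/-- The partial sum `X 0 + ⋯ + X (n - 1)`: the martingale with differences `X k`. -/
def partialSum (X : ℕ → Ω → E) (n : ℕ) (ω : Ω) : E := ∑ k ∈ range n, X k ω

/-- The square of the square function of the martingale with differences `X k`. -/
def squareSum (X : ℕ → Ω → E) (n : ℕ) (ω : Ω) : ℝ := ∑ k ∈ range n, ‖X k ω‖ ^ 2

/-- The squared norm of the martingale plus its squared square function: the variable `r` of
`burkholderFun`. -/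
def energy (X : ℕ → Ω → E) (n : ℕ) (ω : Ω) : ℝ := ‖partialSum X n ω‖ ^ 2 + squareSum X n ω

variable {X : ℕ → Ω → E} {n : ℕ} {ω : Ω}

lemma squareSum_nonneg : 0 ≤ squareSum X n ω := sum_nonneg fun _ _ => sq_nonneg _

lemma squareSum_le_energy : squareSum X n ω ≤ energy X n ω :=
  le_add_of_nonneg_left (sq_nonneg _)

lemma norm_partialSum_sq_le_energy : ‖partialSum X n ω‖ ^ 2 ≤ energy X n ω :=
  le_add_of_nonneg_right squareSum_nonneg

lemma energy_nonneg : 0 ≤ energy X n ω := squareSum_nonneg.trans squareSum_le_energy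

lemma squareSum_succ : squareSum X (n + 1) ω = squareSum X n ω + ‖X n ω‖ ^ 2 :=
  sum_range_succ _ _

lemma energy_le_two_mul_sum_norm_sq : energy X n ω ≤ 2 * (∑ k ∈ range n, ‖X k ω‖) ^ 2 := by
  have hpartial : ‖partialSum X n ω‖ ^ 2 ≤ (∑ k ∈ range n, ‖X k ω‖) ^ 2 := by
    gcongr
    exact norm_sum_le _ _
  have hsquare : squareSum X n ω ≤ (∑ k ∈ range n, ‖X k ω‖) ^ 2 :=
    sum_sq_le_sq_sum_of_nonneg fun _ _ => norm_nonneg _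
  rw [energy, two_mul]
  gcongr

section Measurability

variable {m : MeasurableSpace Ω}

lemma stronglyMeasurable_partialSum (hX : ∀ k < n, StronglyMeasurable (X k)) :
    StronglyMeasurable (partialSum X n) :=
  Finset.stronglyMeasurable_fun_sum _ fun k hk => hX k (mem_range.1 hk)

lemma stronglyMeasurable_squareSum (hX : ∀ k < n, StronglyMeasurable (X k)) :
    StronglyMeasurable (squareSum X n) :=
  Finset.stronglyMeasurable_fun_sum _ fun k hk => (hX k (mem_range.1 hk)).norm.pow 2

lemma stronglyMeasurable_energy (hX : ∀ k < n, StronglyMeasurable (X k)) :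
    StronglyMeasurable (energy X n) :=
  ((stronglyMeasurable_partialSum hX).norm.pow 2).add (stronglyMeasurable_squareSum hX)

end Measurability

section Integrability

variable {m0 : MeasurableSpace Ω} {μ : Measure Ω} {q : ℝ}

lemma integrable_energy_rpow (hq : 0 < q) (hXm : ∀ k, StronglyMeasurable (X k))
    (hX : ∀ k, MemLp (X k) (ENNReal.ofReal (2 * q)) μ) (n : ℕ) :
    Integrable (fun ω => energy X n ω ^ q) μ := by
  have hsum : MemLp (fun ω => ∑ k ∈ range n, ‖X k ω‖) (ENNReal.ofReal (2 * q)) μ :=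
    memLp_finsetSum _ fun k _ => (hX k).norm
  have hdom := (hsum.integrable_norm_rpow (by simpa using hq) ENNReal.ofReal_ne_top).const_mul
    (2 ^ q)
  have henergy := (stronglyMeasurable_energy fun k (_ : k < n) => hXm k).measurable
  refine hdom.mono' (henergy.pow_const q).aestronglyMeasurable (.of_forall fun ω => ?_)
  have hnonneg : 0 ≤ ∑ k ∈ range n, ‖X k ω‖ := by positivity
  calc ‖energy X n ω ^ q‖ = energy X n ω ^ q :=
        Real.norm_of_nonneg (Real.rpow_nonneg energy_nonneg q)
    _ ≤ (2 * (∑ k ∈ range n, ‖X k ω‖) ^ 2) ^ q := by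
        gcongr
        exacts [energy_nonneg, energy_le_two_mul_sum_norm_sq]
    _ = _ := by
        rw [ENNReal.toReal_ofReal (by positivity), Real.norm_of_nonneg hnonneg,
          Real.mul_rpow (by norm_num) (by positivity), Real.rpow_mul hnonneg, Real.rpow_two]

lemma integrable_squareSum_rpow (hq : 0 < q) (hXm : ∀ k, StronglyMeasurable (X k))
    (hX : ∀ k, MemLp (X k) (ENNReal.ofReal (2 * q)) μ) (n : ℕ) :
    Integrable (fun ω => squareSum X n ω ^ q) μ := by
  have hsquare := (stronglyMeasurable_squareSum fun k (_ : k < n) => hXm k).measurable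
  refine (integrable_energy_rpow hq hXm hX n).mono' (hsquare.pow_const q).aestronglyMeasurable
    (.of_forall fun ω => ?_)
  rw [Real.norm_of_nonneg (Real.rpow_nonneg squareSum_nonneg q)]
  exact Real.rpow_le_rpow squareSum_nonneg squareSum_le_energy hq.le

lemma integrable_burkholderFun {A K : ℝ} (hq : 0 < q) (hA : 0 ≤ A) (hK : 0 ≤ K)
    (hXm : ∀ k, StronglyMeasurable (X k)) (hX : ∀ k, MemLp (X k) (ENNReal.ofReal (2 * q)) μ)
    (n : ℕ) : Integrable (fun ω => burkholderFun q A K (energy X n ω) (squareSum X n ω)) μ := by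
  have hsquare := (stronglyMeasurable_squareSum fun k (_ : k < n) => hXm k).measurable
  have henergy := (stronglyMeasurable_energy fun k (_ : k < n) => hXm k).measurable
  refine ((integrable_energy_rpow hq hXm hX n).const_mul (1 + A + K)).mono' ?_
    (.of_forall fun ω => abs_burkholderFun_le hq.le hA hK squareSum_nonneg squareSum_le_energy)
  unfold burkholderFun
  fun_prop

end Integrability

variable [InnerProductSpace ℝ E]

lemma energy_succ : energy X (n + 1) ω =
    energy X n ω + 2 * inner ℝ (partialSum X n ω) (X n ω) + 2 * ‖X n ω‖ ^ 2 := by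
  have hpartial : partialSum X (n + 1) ω = partialSum X n ω + X n ω := sum_range_succ _ _
  rw [energy, energy, squareSum_succ, hpartial, norm_add_sq_real]
  ring

lemma inner_partialSum_sq_le :
    inner ℝ (partialSum X n ω) (X n ω) ^ 2 ≤ energy X n ω * ‖X n ω‖ ^ 2 := by
  calc inner ℝ (partialSum X n ω) (X n ω) ^ 2 ≤ (‖partialSum X n ω‖ * ‖X n ω‖) ^ 2 :=
        sq_le_sq.2 ((abs_real_inner_le_norm _ _).trans (le_abs_self _))
    _ = ‖partialSum X n ω‖ ^ 2 * ‖X n ω‖ ^ 2 := mul_pow _ _ _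
    _ ≤ energy X n ω * ‖X n ω‖ ^ 2 := by gcongr; exact norm_partialSum_sq_le_energy

variable {m0 : MeasurableSpace Ω} {μ : Measure Ω} {q A K : ℝ}

lemma integral_inner_eq_zero_of_condExp_eq_zero [CompleteSpace E] {m : MeasurableSpace Ω}
    (hm : m ≤ m0) [SigmaFinite (μ.trim hm)] {f g : Ω → E} (hf : StronglyMeasurable[m] f)
    (hfg : Integrable (fun ω => inner ℝ (f ω) (g ω)) μ) (hg : Integrable g μ)
    (hg0 : μ[g | m] =ᵐ[μ] 0) : ∫ ω, inner ℝ (f ω) (g ω) ∂μ = 0 := by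
  have hpull : μ[fun ω => inner ℝ (f ω) (g ω) | m] =ᵐ[μ] fun ω => inner ℝ (f ω) (μ[g | m] ω) :=
    condExp_bilin_of_stronglyMeasurable_left (innerSL ℝ) hf hfg hg
  rw [← integral_condExp hm, integral_congr_ae hpull, integral_eq_zero_of_ae]
  filter_upwards [hg0] with ω hω
  simp [hω]

lemma integrable_burkholderSlope_mul_inner (hq : 1 / 2 ≤ q) (hA : 0 ≤ A)
    (hXm : ∀ k, StronglyMeasurable (X k)) (hX : ∀ k, MemLp (X k) (ENNReal.ofReal (2 * q)) μ)
    (n : ℕ) :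
    Integrable (fun ω => burkholderSlope q A (energy X n ω) (squareSum X n ω) *
      inner ℝ (partialSum X n ω) (X n ω)) μ := by
  have hq0 : 0 < q := by linarith
  have hsquare := (stronglyMeasurable_squareSum fun k (_ : k < n) => hXm k).measurable
  have henergy := (stronglyMeasurable_energy fun k (_ : k < n) => hXm k).measurable
  have hinner := ((stronglyMeasurable_partialSum fun k (_ : k < n) => hXm k).inner (𝕜 := ℝ)
    (hXm n)).measurable
  refine ((integrable_energy_rpow hq0 hXm hX (n + 1)).const_mul
    (2 * (q + A * |q - 1|) * 3 ^ q)).mono' ?_ (.of_forall fun ω => ?_)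
  · unfold burkholderSlope
    fun_prop
  have hsum : energy X n ω + ‖X n ω‖ ^ 2 ≤ 3 * energy X (n + 1) ω := by
    rw [energy_succ]
    exact add_le_three_mul_increment energy_nonneg (sq_nonneg _) inner_partialSum_sq_le
  calc _ ≤ 2 * (q + A * |q - 1|) * (energy X n ω + ‖X n ω‖ ^ 2) ^ q :=
        abs_burkholderSlope_mul_le hq hA squareSum_nonneg squareSum_le_energy (sq_nonneg _)
          inner_partialSum_sq_le
    _ ≤ 2 * (q + A * |q - 1|) * (3 * energy X (n + 1) ω) ^ q := by
        have : 0 ≤ energy X n ω := energy_nonneg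
        gcongr
    _ = 2 * (q + A * |q - 1|) * 3 ^ q * energy X (n + 1) ω ^ q := by
        rw [Real.mul_rpow (by norm_num) energy_nonneg, ← mul_assoc]

variable [CompleteSpace E] [IsFiniteMeasure μ] {ℱ : Filtration ℕ m0}

lemma integral_burkholderSlope_mul_inner_eq_zero (hq : 1 / 2 ≤ q) (hA : 0 ≤ A)
    (hadapted : StronglyAdapted ℱ X) (hX : ∀ k, MemLp (X k) (ENNReal.ofReal (2 * q)) μ)
    (hmart : ∀ k, μ[X (k + 1) | ℱ k] =ᵐ[μ] 0) (n : ℕ) :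
    ∫ ω, burkholderSlope q A (energy X n ω) (squareSum X n ω) *
      inner ℝ (partialSum X n ω) (X n ω) ∂μ = 0 := by
  cases n with
  | zero => simp [partialSum]
  | succ n =>
    have hpast : ∀ k < n + 1, StronglyMeasurable[ℱ n] (X k) := fun k hk =>
      hadapted.stronglyMeasurable_le (Nat.lt_succ_iff.1 hk)
    have hsquare := (stronglyMeasurable_squareSum hpast).measurable
    have henergy := (stronglyMeasurable_energy hpast).measurable
    have hslope : Measurable[ℱ n] fun ω =>
        burkholderSlope q A (energy X (n + 1) ω) (squareSum X (n + 1) ω) := by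
      unfold burkholderSlope
      fun_prop
    have hint := integrable_burkholderSlope_mul_inner hq hA
      (fun k => (hadapted k).mono (ℱ.le k)) hX (n + 1)
    simp only [← real_inner_smul_left] at hint ⊢
    exact integral_inner_eq_zero_of_condExp_eq_zero (ℱ.le n)
      (hslope.stronglyMeasurable.smul (stronglyMeasurable_partialSum hpast)) hint
      ((hX (n + 1)).integrable (ENNReal.one_le_ofReal.2 (by linarith))) (hmart n)

lemma BurkholderAdmissible.integral_burkholderFun_nonpos (h : BurkholderAdmissible q A K)
    (hq : 1 / 2 ≤ q) (hadapted : StronglyAdapted ℱ X)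
    (hX : ∀ k, MemLp (X k) (ENNReal.ofReal (2 * q)) μ)
    (hmart : ∀ k, μ[X (k + 1) | ℱ k] =ᵐ[μ] 0) (n : ℕ) :
    ∫ ω, burkholderFun q A K (energy X n ω) (squareSum X n ω) ∂μ ≤ 0 := by
  have hq0 : 0 < q := by linarith
  have hXm : ∀ k, StronglyMeasurable (X k) := fun k => (hadapted k).mono (ℱ.le k)
  have hfun := integrable_burkholderFun hq0 h.nonneg_left h.nonneg_right hXm hX
  have hslope := integrable_burkholderSlope_mul_inner hq h.nonneg_left hXm hX
  induction n with
  | zero => simp [burkholderFun, energy, partialSum, squareSum, Real.zero_rpow hq0.ne']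
  | succ n ih =>
    calc ∫ ω, burkholderFun q A K (energy X (n + 1) ω) (squareSum X (n + 1) ω) ∂μ
        ≤ ∫ ω, (burkholderFun q A K (energy X n ω) (squareSum X n ω) +
            burkholderSlope q A (energy X n ω) (squareSum X n ω) *
              inner ℝ (partialSum X n ω) (X n ω)) ∂μ := by
          refine integral_mono (hfun (n + 1)) ((hfun n).add (hslope n)) fun ω => ?_
          simp only [energy_succ, squareSum_succ]
          exact h.step_le _ _ _ _ squareSum_nonneg squareSum_le_energy (sq_nonneg _)
            inner_partialSum_sq_le
      _ = ∫ ω, burkholderFun q A K (energy X n ω) (squareSum X n ω) ∂μ := by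
          rw [integral_add (hfun n) (hslope n),
            integral_burkholderSlope_mul_inner_eq_zero hq h.nonneg_left hadapted hX hmart, add_zero]
      _ ≤ 0 := ih

lemma BurkholderAdmissible.integral_norm_partialSum_rpow_le (h : BurkholderAdmissible q A K)
    (hq : 1 / 2 ≤ q) (hadapted : StronglyAdapted ℱ X)
    (hX : ∀ k, MemLp (X k) (ENNReal.ofReal (2 * q)) μ)
    (hmart : ∀ k, μ[X (k + 1) | ℱ k] =ᵐ[μ] 0) (n : ℕ) :
    ∫ ω, ‖partialSum X n ω‖ ^ (2 * q) ∂μ ≤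
      (2 * K + (1 + 2 * A) * (2 * A) ^ q) * ∫ ω, squareSum X n ω ^ q ∂μ := by
  have hq0 : 0 < q := by linarith
  have hXm : ∀ k, StronglyMeasurable (X k) := fun k => (hadapted k).mono (ℱ.le k)
  have hfun := (integrable_burkholderFun hq0 h.nonneg_left h.nonneg_right hXm hX n).const_mul 2
  have hsquare := (integrable_squareSum_rpow hq0 hXm hX n).const_mul
    (2 * K + (1 + 2 * A) * (2 * A) ^ q)
  have hpointwise : ∀ ω, ‖partialSum X n ω‖ ^ (2 * q) ≤
      2 * burkholderFun q A K (energy X n ω) (squareSum X n ω) +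
        (2 * K + (1 + 2 * A) * (2 * A) ^ q) * squareSum X n ω ^ q := fun ω => by
    calc ‖partialSum X n ω‖ ^ (2 * q) = (‖partialSum X n ω‖ ^ 2) ^ q := by
          rw [Real.rpow_mul (norm_nonneg _), Real.rpow_two]
      _ ≤ energy X n ω ^ q := by gcongr; exact norm_partialSum_sq_le_energy
      _ ≤ _ := rpow_le_two_mul_burkholderFun_add K hq0.le h.nonneg_left squareSum_nonneg
          squareSum_le_energy
  calc ∫ ω, ‖partialSum X n ω‖ ^ (2 * q) ∂μ
      ≤ ∫ ω, (2 * burkholderFun q A K (energy X n ω) (squareSum X n ω) +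
          (2 * K + (1 + 2 * A) * (2 * A) ^ q) * squareSum X n ω ^ q) ∂μ :=
        integral_mono_of_nonneg (.of_forall fun ω => by positivity) (hfun.add hsquare)
          (.of_forall hpointwise)
    _ = 2 * ∫ ω, burkholderFun q A K (energy X n ω) (squareSum X n ω) ∂μ +
          (2 * K + (1 + 2 * A) * (2 * A) ^ q) * ∫ ω, squareSum X n ω ^ q ∂μ := by
        rw [integral_add hfun hsquare, integral_const_mul, integral_const_mul]
    _ ≤ (2 * K + (1 + 2 * A) * (2 * A) ^ q) * ∫ ω, squareSum X n ω ^ q ∂μ := by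
        linarith [h.integral_burkholderFun_nonpos hq hadapted hX hmart n]

end Martingale

theorem burkholder_inequality_general (p : ℝ) (hp : 1 ≤ p) :
    ∃ K : ℝ, 0 < K ∧
      ∀ (Ω E : Type*) [NormedAddCommGroup E] [InnerProductSpace ℝ E] [CompleteSpace E]
        (m0 : MeasurableSpace Ω) (μ : Measure Ω) [IsFiniteMeasure μ] (ℱ : Filtration ℕ m0)
        (X : ℕ → Ω → E),
        StronglyAdapted ℱ X →
        (∀ k, Integrable (fun ω => ‖X k ω‖ ^ p) μ) →
        (∀ k, μ[X (k + 1) | ℱ k] =ᵐ[μ] 0) →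
        ∀ n : ℕ,
          ∫ ω, ‖∑ k ∈ Finset.range n, X k ω‖ ^ p ∂μ ≤
            K * ∫ ω, (∑ k ∈ Finset.range n, ‖X k ω‖ ^ 2) ^ (p / 2) ∂μ := by
  obtain ⟨q, rfl⟩ : ∃ q, p = 2 * q := ⟨p / 2, by ring⟩
  have hq : 1 / 2 ≤ q := by linarith
  obtain ⟨A, K, h⟩ := exists_burkholderAdmissible hq
  have hA := h.nonneg_left
  have hK := h.nonneg_right
  refine ⟨2 * K + (1 + 2 * A) * (2 * A) ^ q + 1, by positivity, ?_⟩
  intro Ω E _ _ _ m0 μ _ ℱ X hadapted hXp hmart n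
  rw [mul_div_cancel_left₀ q two_ne_zero]
  have hX : ∀ k, MemLp (X k) (ENNReal.ofReal (2 * q)) μ := fun k => by
    refine (integrable_norm_rpow_iff ((hadapted k).mono (ℱ.le k)).aestronglyMeasurable
      (by simpa using by linarith) ENNReal.ofReal_ne_top).1 ?_
    simpa only [ENNReal.toReal_ofReal (by linarith : 0 ≤ 2 * q)] using hXp k
  exact (h.integral_norm_partialSum_rpow_le hq hadapted hX hmart n).trans <|
    mul_le_mul_of_nonneg_right (le_add_of_nonneg_right zero_le_one)
      (integral_nonneg fun ω => Real.rpow_nonneg squareSum_nonneg q)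

/-- Burkholder's inequality: for `p > 1` there is a constant `K_p` depending only
on `p` such that for every complex martingale difference sequence `X`,
`E|Σ X_k|^p ≤ K_p E(Σ |X_k|²)^{p/2}`. -/
theorem burkholder_inequality (p : ℝ) (hp : 1 < p) :
    ∃ K : ℝ, 0 < K ∧
      ∀ (Ω : Type) (m0 : MeasurableSpace Ω) (μ : Measure Ω),
        IsProbabilityMeasure μ →
        ∀ (ℱ : Filtration ℕ m0) (X : ℕ → Ω → ℂ),
          Adapted ℱ X →
          (∀ k, Integrable (fun ω => ‖X k ω‖ ^ p) μ) →
          (μ[X 0 | (⊥ : MeasurableSpace Ω)] =ᵐ[μ] 0) →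
          (∀ k : ℕ, μ[X (k + 1) | ℱ k] =ᵐ[μ] 0) →
          ∀ n : ℕ,
            ∫ ω, ‖∑ k ∈ Finset.range n, X k ω‖ ^ p ∂μ ≤
              K * ∫ ω, (∑ k ∈ Finset.range n, ‖X k ω‖ ^ 2) ^ (p / 2) ∂μ := by
  obtain ⟨K, hK, h⟩ := burkholder_inequality_general p hp.le
  exact ⟨K, hK, fun Ω m0 μ _ ℱ X hX hXp _ hX0 => h Ω ℂ m0 μ ℱ X hX.stronglyAdapted hXp hX0⟩
end
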